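/- arXiv:1712.07338 — 3 statements merged into one kernel-verified Lean document; each statement's English description precedes it below -/
import Mathlib

section
/- Let m and n be positive integers with m odd and m ≡ 0 (mod 3), and let k be an integer with k ≡ 1 (mod 18) or k ≡ -1 (mod 18) and gcd(m, k) = 1. Let d₁ be the squarefree part of 3(4m^{3n} − k²). Then 3 divides the class number of the quadratic field ℚ(√d₁). -/
/-!
Put `M = mⁿ` and, replacing `k` by `-k` if necessary, let `k ≡ 1 (mod 18)`. Over `K = ℚ(√d₁)` the
discriminant of `X³ - 3MX - k` is `(3s)²` with `s² = 3 (4M³ - k²)`, so a root `θ` generates a cyclic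
cubic extension `L/K`. A prime at which it ramifies has nontrivial inertia, which makes the three
conjugates of `θ` congruent. This puts `3` into the prime because `M` and `k` are coprime, and above
`3` it is contradicted by the conjugates of the integral element `(θ - 1) s / 3`. Hence `L/K` is
unramified.

The class number of `K` is then divisible by `3` by Hilbert's Theorem 94: comparing unit ranks gives
a unit of `L` of relative norm one that is not of the form `ε / σ ε` with `ε` a unit. By Hilbert's
Theorem 90 it is `α / σ α`, and the ideal `(α)`, being Galois invariant in an unramified extension,
comes from an ideal of `K`, which is not principal although its cube is.
-/

open Module NumberField

section Lattice

variable {R M N : Type*} [CommRing R] [AddCommGroup M] [AddCommGroup N] [Module R M] [Module R N]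

theorem exists_pow_smul_eq_sum_pow_apply_add_pow_apply {T : Module.End R M} {f : N →ₗ[R] M} {w : R}
    (h : ∀ x, ∃ c y, w • x = f c + T y) (n : ℕ) (x : M) :
    ∃ (c : ℕ → N) (y : M), w ^ n • x = ∑ i ∈ Finset.range n, (T ^ i) (f (c i)) + (T ^ n) y := by
  induction n generalizing x with
  | zero => exact ⟨0, x, by simp⟩
  | succ n ih =>
    obtain ⟨c₀, x', hx⟩ := h x
    obtain ⟨c, y, hx'⟩ := ih x'
    refine ⟨fun i ↦ i.casesOn (w ^ n • c₀) c, y, ?_⟩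
    calc w ^ (n + 1) • x = f (w ^ n • c₀) + T (w ^ n • x') := by
          rw [pow_succ, mul_smul, hx, smul_add, map_smul, map_smul]
      _ = _ := by
          simp only [hx', Finset.sum_range_succ', map_add, map_sum, pow_succ', Module.End.mul_apply,
            pow_zero, Module.End.one_apply]
          rw [← add_assoc, add_comm (f _)]
          rfl

variable [IsDomain R] [Module.Finite R M] [Module.Finite R N]

theorem finrank_le_of_forall_exists_smul_eq_apply_add_smul {f : N →ₗ[R] M} {q w : R}
    (hq : ¬ IsUnit q) (hw : IsCoprime w q) (h : ∀ x, ∃ c y, w • x = f c + q • y) :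
    finrank R M ≤ finrank R N := by
  obtain ⟨a, b, hab⟩ := hw
  have le_smul : (⊤ : Submodule R (M ⧸ f.range)) ≤ Ideal.span {q} • ⊤ := by
    rintro x' -
    obtain ⟨x, rfl⟩ := f.range.mkQ_surjective x'
    obtain ⟨c, y, hy⟩ := h x
    have hx : x = f (a • c) + q • (a • y + b • x) := by
      calc x = a • w • x + b • q • x := by rw [smul_smul, smul_smul, ← add_smul, hab, one_smul]
        _ = _ := by rw [hy, map_smul]; module
    have mkQ_apply_eq_zero : f.range.mkQ (f (a • c)) = 0 :=
      (Submodule.Quotient.mk_eq_zero _).mpr (f.mem_range_self _)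
    rw [hx, map_add, mkQ_apply_eq_zero, zero_add, map_smul]
    exact Submodule.smul_mem_smul (Ideal.mem_span_singleton_self q) trivial
  obtain ⟨r, hr, hr_smul⟩ :=
    Submodule.exists_sub_one_mem_and_smul_eq_zero_of_fg_of_le_smul _ _ Module.Finite.fg_top le_smul
  have hr₀ : r ≠ 0 := by
    rintro rfl
    rw [zero_sub, neg_mem_iff, Ideal.mem_span_singleton] at hr
    exact hq (isUnit_of_dvd_one hr)
  have finrank_quotient : finrank R (M ⧸ f.range) = 0 :=
    Module.finrank_eq_zero_iff_isTorsion.mpr fun x ↦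
      ⟨⟨r, mem_nonZeroDivisors_of_ne_zero hr₀⟩, hr_smul x trivial⟩
  calc finrank R M = finrank R f.range := by
        rw [← f.range.finrank_quotient_add_finrank, finrank_quotient, zero_add]
    _ ≤ finrank R N := f.finrank_range_le

theorem finrank_le_mul_finrank_of_ker_subset_range [IsPrincipalIdealRing R]
    [Module.IsTorsionFree R N] {T : Module.End R M} {ν : M →ₗ[R] N} {q w : R} {n : ℕ}
    (hq : ¬ IsUnit q) (hw : IsCoprime w q) (hT : ∀ x, ∃ y, (T ^ n) x = q • y)
    (hν : ∀ x, ν x = 0 → w • x ∈ T.range) :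
    finrank R M ≤ n * finrank R N := by
  obtain ⟨s, hs⟩ := Module.projective_lifting_property ν.rangeRestrict LinearMap.id
    ν.surjective_rangeRestrict
  have decomp (x : M) : ∃ c y, w • x = s c + T y := by
    have hker : ν (x - s (ν.rangeRestrict x)) = 0 := by
      rw [map_sub, sub_eq_zero]
      exact congrArg Subtype.val (LinearMap.congr_fun hs (ν.rangeRestrict x)).symm
    obtain ⟨y, hy⟩ := hν _ hker
    exact ⟨w • ν.rangeRestrict x, y, by rw [hy, map_smul, smul_sub, add_sub_cancel]⟩
  let f : (Fin n → ν.range) →ₗ[R] M := ∑ i : Fin n, (T ^ (i : ℕ)) ∘ₗ s ∘ₗ LinearMap.proj i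
  have hf (x : M) : ∃ c y, w ^ n • x = f c + q • y := by
    obtain ⟨c, y, hx⟩ := exists_pow_smul_eq_sum_pow_apply_add_pow_apply decomp n x
    obtain ⟨z, hz⟩ := hT y
    exact ⟨fun i ↦ c i, z, by simp [f, hx, hz, Finset.sum_range]⟩
  calc finrank R M ≤ finrank R (Fin n → ν.range) :=
        finrank_le_of_forall_exists_smul_eq_apply_add_smul hq hw.pow_left hf
    _ = n * finrank R ν.range := by rw [finrank_pi_fintype]; simp
    _ ≤ n * finrank R N := Nat.mul_le_mul_left n ν.range.finrank_le

end Lattice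

theorem exists_one_sub_pow_prime_eq {R : Type*} [Ring R] {p : ℕ} (hp : p.Prime) (hodd : Odd p)
    {S : R} (hS : S ^ p = 1) :
    ∃ r, (1 - S) ^ p = p * r := by
  obtain ⟨r, hr⟩ := (Commute.one_left (-S)).exists_add_pow_prime_eq hp
  refine ⟨1 * -S * r, ?_⟩
  rw [sub_eq_add_neg, hr, hodd.neg_pow, hS, one_pow, add_neg_cancel, zero_add]
  simp only [mul_assoc]

section HilbertNinety

variable {G B : Type*} [Monoid G] [CommRing B] [IsDomain B] [MulSemiringAction G B]
  [FaithfulSMul G B] {σ : G}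

theorem exists_sum_mul_pow_smul_ne_zero (hσ : IsOfFinOrder σ) {c : ℕ → B} (hc : c 0 ≠ 0) :
    ∃ x : B, ∑ i ∈ Finset.range (orderOf σ), c i * σ ^ i • x ≠ 0 := by
  let χ (i : Fin (orderOf σ)) : B →* B := MulSemiringAction.toRingHom G B (σ ^ (i : ℕ))
  have χ_injective : Function.Injective χ := fun i j hij ↦ Fin.ext <|
    pow_injOn_Iio_orderOf i.2 j.2 <| FaithfulSMul.eq_of_smul_eq_smul (DFunLike.congr_fun hij)
  have independent := (linearIndependent_monoidHom B B).comp χ χ_injective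
  by_contra! h
  refine hc (Fintype.linearIndependent_iff.mp independent (fun i ↦ c i) ?_ ⟨0, hσ.orderOf_pos⟩)
  ext x
  rw [Pi.zero_apply, ← h x, Finset.sum_range, Finset.sum_apply]
  rfl

theorem exists_mul_smul_eq_of_prod_pow_smul_eq_one (hσ : IsOfFinOrder σ) {η : B}
    (hη : ∏ i ∈ Finset.range (orderOf σ), σ ^ i • η = 1) : ∃ α ≠ 0, η * σ • α = α := by
  let c (i : ℕ) : B := ∏ j ∈ Finset.range i, σ ^ j • η
  have c_succ (i : ℕ) : c (i + 1) = η * σ • c i := by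
    simp only [c, Finset.prod_range_succ', Finset.smul_prod', smul_smul, ← pow_succ', pow_zero,
      one_smul, mul_comm η]
  obtain ⟨x, hx⟩ := exists_sum_mul_pow_smul_ne_zero hσ (c := c) (by simp [c])
  refine ⟨_, hx, ?_⟩
  calc η * σ • ∑ i ∈ Finset.range (orderOf σ), c i * σ ^ i • x
      = ∑ i ∈ Finset.range (orderOf σ), c (i + 1) * σ ^ (i + 1) • x := by
        simp only [c_succ, Finset.smul_sum, Finset.mul_sum, smul_mul', smul_smul, pow_succ',
          mul_assoc]
    _ = ∑ i ∈ Finset.range (orderOf σ), c i * σ ^ i • x := by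
        have h := (Finset.sum_range_succ' (fun i ↦ c i * σ ^ i • x) (orderOf σ)).symm.trans
          (Finset.sum_range_succ _ _)
        rwa [show c (orderOf σ) = c 0 from hη, pow_orderOf_eq_one, pow_zero, add_left_inj] at h

end HilbertNinety

section UnitsOfCyclicExtension

set_option maxSynthPendingDepth 3

variable {K L : Type*} [Field K] [Field L] [Algebra K L]

/-- The relative norm on units, followed by reduction modulo the roots of unity of `K`; written
additively, so that its target is a free `ℤ`-module. -/
noncomputable def unitNormModTorsion :
    Additive (𝓞 L)ˣ →ₗ[ℤ] Additive ((𝓞 K)ˣ ⧸ Units.torsion K) :=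
  (MonoidHom.toAdditive ((QuotientGroup.mk' (Units.torsion K)).comp
    (Units.map (RingOfIntegers.norm K)))).toIntLinearMap

theorem norm_pow_torsionOrder_eq_one_of_unitNormModTorsion_eq_zero {ε : (𝓞 L)ˣ}
    (hε : unitNormModTorsion (K := K) (Additive.ofMul ε) = 0) :
    Units.map (RingOfIntegers.norm K) (ε ^ Units.torsionOrder K) = 1 := by
  have mem_torsion : Units.map (RingOfIntegers.norm K) ε ∈ Units.torsion K :=
    (QuotientGroup.eq_one_iff _).mp hε
  have pow_eq_one : (⟨_, mem_torsion⟩ : Units.torsion K) ^ Units.torsionOrder K = 1 :=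
    pow_card_eq_one'
  rw [map_pow]
  exact congrArg Subtype.val pow_eq_one

variable [NumberField K] [NumberField L] [IsGalois K L]

theorem rank_add_one_eq_mul_finrank_of_odd_finrank (h : Odd (finrank K L)) :
    Units.rank L + 1 = (Units.rank K + 1) * finrank K L := by
  have := IsUnramifiedAtInfinitePlaces_of_odd_finrank h
  rw [Units.rank, Units.rank, Nat.sub_add_cancel Fintype.card_pos,
    Nat.sub_add_cancel Fintype.card_pos, IsUnramifiedAtInfinitePlaces.card_infinitePlace K L]

theorem algebraMap_norm_eq_prod_pow_smul {σ : Gal(L/K)} (hσ : ∀ g, g ∈ Subgroup.zpowers σ)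
    (x : 𝓞 L) : algebraMap (𝓞 K) (𝓞 L) (RingOfIntegers.norm K x) =
      ∏ i ∈ Finset.range (orderOf σ), σ ^ i • x := by
  classical
  apply RingOfIntegers.ext
  calc algebraMap K L (Algebra.norm K (x : L)) = ∏ g : Gal(L/K), g (x : L) :=
        Algebra.norm_eq_prod_automorphisms K (x : L)
    _ = ∏ i ∈ Finset.range (orderOf σ), (σ ^ i) (x : L) := by
        rw [← IsCyclic.image_range_orderOf hσ, Finset.prod_image]
        exact fun i hi j hj ↦ pow_injOn_Iio_orderOf (by simpa using hi) (by simpa using hj)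
    _ = _ := (map_prod (algebraMap (𝓞 L) L) (fun i ↦ σ ^ i • x) _).symm

attribute [local instance] Units.mulDistribMulActionRight

theorem exists_unit_norm_eq_one_forall_mul_smul_ne (hp : (finrank K L).Prime)
    (htors : (Units.torsionOrder K).Coprime (finrank K L)) (σ : Gal(L/K)) :
    ∃ η : (𝓞 L)ˣ, RingOfIntegers.norm K (η : 𝓞 L) = 1 ∧
      ∀ ε : (𝓞 L)ˣ, (η : 𝓞 L) * σ • (ε : 𝓞 L) ≠ ε := by
  by_contra! exists_unit
  have hodd : Odd (finrank K L) :=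
    Nat.not_even_iff_odd.mp fun h ↦ Nat.not_coprime_of_dvd_of_dvd one_lt_two
      (Units.even_torsionOrder K).two_dvd h.two_dvd htors
  let S : End ℤ (Additive (𝓞 L)ˣ) := Representation.ofMulDistribMulAction Gal(L/K) (𝓞 L)ˣ σ
  have hS : S ^ finrank K L = 1 := by
    rw [← map_pow, ← IsGalois.card_aut_eq_finrank, pow_card_eq_one', map_one]
  obtain ⟨r, hr⟩ := exists_one_sub_pow_prime_eq hp hodd hS
  have ker_subset (x : Additive (𝓞 L)ˣ) (hx : unitNormModTorsion (K := K) x = 0) :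
      (Units.torsionOrder K : ℤ) • x ∈ (1 - S).range := by
    obtain ⟨ε, hε⟩ := exists_unit _ (congrArg Units.val
      (norm_pow_torsionOrder_eq_one_of_unitNormModTorsion_eq_zero hx))
    refine ⟨Additive.ofMul ε, ?_⟩
    have h : x.toMul ^ Units.torsionOrder K * σ • ε = ε := Units.ext hε
    rw [natCast_zsmul]
    exact sub_eq_of_eq_add (congrArg Additive.ofMul h).symm
  have rank_le := finrank_le_mul_finrank_of_ker_subset_range
    (Nat.prime_iff_prime_int.mp hp).not_isUnit (Nat.isCoprime_iff_coprime.mpr htors)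
    (fun x ↦ ⟨r x, by rw [hr]; simp⟩) ker_subset
  rw [Units.finrank_eq, Units.finrank_modTorsion] at rank_le
  have rank_eq := rank_add_one_eq_mul_finrank_of_odd_finrank hodd
  have := hp.two_le
  linarith

end UnitsOfCyclicExtension

section IdealDescent

open scoped Pointwise

variable {A B G : Type*} [CommRing A] [CommRing B] [Algebra A B] [Group G] [MulSemiringAction G B]

theorem smul_map_algebraMap_eq [SMulCommClass G A B] (g : G) (p : Ideal A) :
    g • p.map (algebraMap A B) = p.map (algebraMap A B) := by
  rw [Ideal.pointwise_smul_def, Ideal.map_map]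
  congr 1
  ext x
  exact smul_algebraMap g x

variable [Finite G] [IsGaloisGroup G A B]

theorem le_of_forall_smul_eq_of_le_of_under_eq {I P Q : Ideal B} [P.IsPrime] [Q.IsPrime]
    (hI : ∀ g : G, g • I = I) (hIP : I ≤ P) (hPQ : P.under A = Q.under A) : I ≤ Q := by
  have : P.LiesOver (Q.under A) := ⟨hPQ.symm⟩
  obtain ⟨g, rfl⟩ := Ideal.exists_smul_eq_of_isGaloisGroup (Q.under A) P Q G
  rw [← hI g]
  exact Ideal.pointwise_smul_le_pointwise_smul_iff.mpr hIP

theorem ramificationIdx_eq_one_of_inertia_eq_bot [IsDomain A] [IsDomain B] [Module.Finite A B]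
    [Module.Flat A B] {P : Ideal B} [P.IsPrime] [PerfectField (P.under A).ResidueField]
    (hP : P.inertia G = ⊥) : P.ramificationIdx A = 1 := by
  rw [← Ideal.ramificationIdxIn_eq_ramificationIdx (P.under A) P G,
    ← Ideal.card_inertia_eq_ramificationIdxIn (G := G) (P.under A) P, hP, Subgroup.card_bot]

variable [IsDomain A] [IsDedekindDomain B] [Algebra.IsIntegral A B] [Module.IsTorsionFree A B]

theorem le_map_under_of_forall_smul_eq_of_le
    (hram : ∀ P : Ideal B, P.IsPrime → P ≠ ⊥ → P.ramificationIdx A = 1) {I P : Ideal B}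
    [P.IsMaximal] (hP : P ≠ ⊥) (hI : ∀ g : G, g • I = I) (hIP : I ≤ P) :
    I ≤ (P.under A).map (algebraMap A B) := by
  have under_ne_bot : P.under A ≠ ⊥ := Ideal.IsIntegral.comap_ne_bot _ hP
  have : (P.under A).IsMaximal := Ideal.isMaximal_comap_of_isIntegral_of_isMaximal P
  rw [Ideal.map_algebraMap_eq_finsetProd_pow under_ne_bot, ← Ideal.dvd_iff_le]
  refine Finset.prod_dvd_of_coprime (fun Q hQ Q' hQ' hne ↦ ?_) fun Q hQ ↦ ?_
  · obtain ⟨_, _⟩ := Set.mem_toFinset.mp hQ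
    obtain ⟨_, _⟩ := Set.mem_toFinset.mp hQ'
    have := Ideal.IsMaximal.of_liesOver_isMaximal Q (P.under A)
    have := Ideal.IsMaximal.of_liesOver_isMaximal Q' (P.under A)
    exact (Ideal.isCoprime_of_isMaximal hne).pow
  · obtain ⟨_, hQ⟩ := Set.mem_toFinset.mp hQ
    rw [hram Q inferInstance (Ideal.ne_bot_of_liesOver_of_ne_bot under_ne_bot Q), pow_one,
      Ideal.dvd_iff_le]
    exact le_of_forall_smul_eq_of_le_of_under_eq hI hIP hQ.over

theorem exists_map_algebraMap_eq_of_forall_smul_eq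
    (hram : ∀ P : Ideal B, P.IsPrime → P ≠ ⊥ → P.ramificationIdx A = 1) {I : Ideal B}
    (hI₀ : I ≠ ⊥) (hI : ∀ g : G, g • I = I) : ∃ J : Ideal A, J.map (algebraMap A B) = I := by
  induction I using WellFoundedGT.induction with
  | ind I ih =>
  by_cases hI_top : I = ⊤
  · exact ⟨⊤, by rw [hI_top, Ideal.map_top]⟩
  obtain ⟨P, _, hIP⟩ := Ideal.exists_le_maximal I hI_top
  have hP : P ≠ ⊥ := ne_bot_of_le_ne_bot hI₀ hIP
  set q := (P.under A).map (algebraMap A B)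
  obtain ⟨I', rfl⟩ := Ideal.dvd_iff_le.mpr (le_map_under_of_forall_smul_eq_of_le hram hP hI hIP)
  have q_ne_bot : q ≠ ⊥ := left_ne_zero_of_mul hI₀
  have I'_ne_bot : I' ≠ ⊥ := right_ne_zero_of_mul hI₀
  have q_ne_top : q ≠ ⊤ := ne_top_of_le_ne_top Ideal.IsPrime.ne_top' Ideal.map_comap_le
  have mul_ne : q * I' ≠ I' := fun h ↦ q_ne_top <| by
    rw [← Ideal.one_eq_top]
    exact mul_right_cancel₀ I'_ne_bot (h.trans (one_mul I').symm)
  have hI' : ∀ g : G, g • I' = I' := fun g ↦ mul_left_cancel₀ q_ne_bot <| by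
    rw [← hI g, smul_mul', smul_map_algebraMap_eq]
  obtain ⟨J, hJ⟩ := ih I' (Ideal.mul_le_right.lt_of_ne mul_ne) I'_ne_bot hI'
  exact ⟨P.under A * J, by rw [Ideal.map_mul, hJ]⟩

end IdealDescent

section ClassGroup

theorem prime_dvd_card_classGroup_of_isPrincipal_pow {R : Type*} [CommRing R] [IsDedekindDomain R]
    {p : ℕ} (hp : p.Prime) {J : Ideal R} (hJ₀ : J ≠ ⊥) (hJp : (J ^ p).IsPrincipal)
    (hJ : ¬ J.IsPrincipal) : p ∣ Nat.card (ClassGroup R) := by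
  have : Fact p.Prime := ⟨hp⟩
  have mk0_pow : ClassGroup.mk0 ⟨J, mem_nonZeroDivisors_of_ne_zero hJ₀⟩ ^ p = 1 := by
    rw [← map_pow]
    exact (ClassGroup.mk0_eq_one_iff _).mpr hJp
  rw [← orderOf_eq_prime mk0_pow (mt (ClassGroup.mk0_eq_one_iff _).mp hJ)]
  exact orderOf_dvd_natCard _

variable {A B : Type*} [CommRing A] [CommRing B] [Algebra A B]

theorem isPrincipal_pow_finrank_of_isPrincipal_map [IsDedekindDomain A] [IsDedekindDomain B]
    [Module.Finite A B] [Module.IsTorsionFree A B] {J : Ideal A}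
    (hJ : (J.map (algebraMap A B)).IsPrincipal) : (J ^ finrank A B).IsPrincipal := by
  obtain ⟨α, hα⟩ := hJ
  rw [← Ideal.relNorm_algebraMap, hα]
  exact ⟨_, Ideal.relNorm_singleton A α⟩

theorem exists_unit_mul_smul_eq_of_map_eq_span_singleton [IsDomain B] {G : Type*} [Group G]
    [MulSemiringAction G B] [SMulCommClass G A B] {σ : G} {α η : B} (hα₀ : α ≠ 0)
    (hα : η * σ • α = α) {J : Ideal A} (hJ : J.IsPrincipal)
    (hJα : J.map (algebraMap A B) = Ideal.span {α}) : ∃ ε : Bˣ, η * σ • (ε : B) = ε := by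
  obtain ⟨a, rfl⟩ := hJ
  rw [Ideal.submodule_span_eq, Ideal.map_span, Set.image_singleton,
    Ideal.span_singleton_eq_span_singleton] at hJα
  obtain ⟨ε, rfl⟩ := hJα
  rw [smul_mul', smul_algebraMap, mul_left_comm] at hα
  exact ⟨ε, mul_left_cancel₀ (left_ne_zero_of_mul hα₀) hα⟩

end ClassGroup

section HilbertNinetyFour

open scoped Pointwise

variable {K L : Type*} [Field K] [NumberField K] [Field L] [NumberField L] [Algebra K L]
  [IsGalois K L]

theorem prime_finrank_dvd_classNumber_of_ramificationIdx_eq_one (hp : (finrank K L).Prime)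
    (htors : (Units.torsionOrder K).Coprime (finrank K L))
    (hram : ∀ P : Ideal (𝓞 L), P.IsPrime → P ≠ ⊥ → P.ramificationIdx (𝓞 K) = 1) :
    finrank K L ∣ classNumber K := by
  have hcard : Nat.card Gal(L/K) = finrank K L := IsGalois.card_aut_eq_finrank K L
  have : Fact (finrank K L).Prime := ⟨hp⟩
  have : IsCyclic Gal(L/K) := isCyclic_of_prime_card hcard
  obtain ⟨σ, hσ⟩ := IsCyclic.exists_generator (α := Gal(L/K))
  have : FaithfulSMul Gal(L/K) (𝓞 L) := IsGaloisGroup.faithful (𝓞 K)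
  obtain ⟨η, norm_η, hη⟩ := exists_unit_norm_eq_one_forall_mul_smul_ne hp htors σ
  obtain ⟨α, hα₀, hα⟩ := exists_mul_smul_eq_of_prod_pow_smul_eq_one (η := (η : 𝓞 L))
    (isOfFinOrder_of_finite σ) (by rw [← algebraMap_norm_eq_prod_pow_smul hσ, norm_η, map_one])
  have span_smul : ∀ g : Gal(L/K), g • Ideal.span {α} = Ideal.span {α} := by
    have σ_mem : σ ∈ MulAction.stabilizer Gal(L/K) (Ideal.span {α}) := by
      rw [MulAction.mem_stabilizer_iff, Ideal.pointwise_smul_def, Ideal.map_span,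
        Set.image_singleton, Ideal.span_singleton_eq_span_singleton]
      exact ⟨η, (mul_comm _ _).trans hα⟩
    exact fun g ↦ Subgroup.zpowers_le.mpr σ_mem (hσ g)
  obtain ⟨J, hJ⟩ := exists_map_algebraMap_eq_of_forall_smul_eq hram
    (mt Ideal.span_singleton_eq_bot.mp hα₀) span_smul
  have hJ₀ : J ≠ ⊥ := by
    rintro rfl
    rw [Ideal.map_bot] at hJ
    exact hα₀ (Ideal.span_singleton_eq_bot.mp hJ.symm)
  have hJ_pow : (J ^ finrank K L).IsPrincipal := by
    rw [IsFractionRing.finrank_eq (𝓞 K) K (𝓞 L) L]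
    exact isPrincipal_pow_finrank_of_isPrincipal_map ⟨α, hJ⟩
  rw [classNumber, ← Nat.card_eq_fintype_card]
  refine prime_dvd_card_classGroup_of_isPrincipal_pow hp hJ₀ hJ_pow fun hJ_principal ↦ ?_
  obtain ⟨ε, hε⟩ := exists_unit_mul_smul_eq_of_map_eq_span_singleton hα₀ hα hJ_principal hJ
  exact hη ε hε

end HilbertNinetyFour

section CubicField

open Polynomial

theorem toPoly_eq_X_sub_C_mul_of_eval_eq_zero {R : Type*} [CommRing R] {P : Cubic R} {t : R}
    (ht : P.toPoly.eval t = 0) :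
    P.toPoly = (X - C t) * (C P.a * X ^ 2 + C (P.b + P.a * t) * X +
      C (P.c + P.b * t + P.a * t ^ 2)) := by
  have hC : C (P.toPoly.eval t) = 0 := by rw [ht, C_0]
  simp only [Cubic.toPoly, eval_add, eval_mul, eval_C, eval_pow, eval_X, C_add, C_mul, C_pow]
    at hC ⊢
  linear_combination hC

theorem discr_eq_discrim_mul_of_eval_eq_zero {R : Type*} [CommRing R] {P : Cubic R} {t : R}
    (ht : P.toPoly.eval t = 0) :
    P.discr = discrim P.a (P.b + P.a * t) (P.c + P.b * t + P.a * t ^ 2) *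
      P.toPoly.derivative.eval t ^ 2 := by
  simp only [Cubic.toPoly, derivative_add, derivative_C_mul, derivative_X_pow, derivative_C,
    derivative_X, eval_add, eval_mul, eval_C, eval_pow, eval_X, eval_one, eval_zero] at ht ⊢
  simp only [Cubic.discr, discrim]
  linear_combination (18 * P.a * P.b * P.c - 4 * P.b ^ 3 -
    27 * P.a ^ 2 * (P.d - (P.a * t ^ 3 + P.b * t ^ 2 + P.c * t))) * ht

variable {F E : Type*} [Field F] [Field E] [Algebra F E] {P : Cubic F} {t : F}

theorem splits_toPoly_of_isSquare_discr [NeZero (2 : F)] (ha : P.a ≠ 0)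
    (ht : P.toPoly.eval t = 0) (ht' : P.toPoly.derivative.eval t ≠ 0) (hP : IsSquare P.discr) :
    P.toPoly.Splits := by
  have isSquare_discrim : IsSquare
      (discrim P.a (P.b + P.a * t) (P.c + P.b * t + P.a * t ^ 2)) := by
    rw [eq_div_of_mul_eq (pow_ne_zero 2 ht') (discr_eq_discrim_mul_of_eval_eq_zero ht).symm]
    exact hP.div (.sq _)
  obtain ⟨x, hx⟩ := exists_quadratic_eq_zero ha isSquare_discrim
  rw [toPoly_eq_X_sub_C_mul_of_eval_eq_zero ht]
  refine (Splits.X_sub_C t).mul (.of_natDegree_eq_two (x := x) (natDegree_quadratic ha) ?_)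
  simpa [sq] using hx

theorem isGalois_of_isSquare_discr [CharZero F] (ha : P.a ≠ 0) (hirr : Irreducible P.toPoly)
    (hP : IsSquare P.discr) {x : E} (hx : aeval x P.toPoly = 0) (htop : Algebra.adjoin F {x} = ⊤) :
    IsGalois F E := by
  have : CharZero E := charZero_of_injective_algebraMap (algebraMap F E).injective
  have splits : (P.toPoly.map (algebraMap F E)).Splits := by
    rw [← Cubic.map_toPoly]
    refine splits_toPoly_of_isSquare_discr (t := x) ?_ ?_ ?_ ?_
    · exact (_root_.map_ne_zero _).mpr ha
    · rwa [Cubic.map_toPoly, eval_map_algebraMap]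
    · rw [Cubic.map_toPoly, derivative_map, eval_map]
      exact hirr.separable.eval₂_derivative_ne_zero _ hx
    · have : (P.map (algebraMap F E)).discr = algebraMap F E P.discr := by
        simp [Cubic.map, Cubic.discr, map_ofNat]
      rw [this]
      exact hP.map _
  have : P.toPoly.IsSplittingField F E := ⟨splits, top_unique <| htop.ge.trans <|
    Algebra.adjoin_mono <| Set.singleton_subset_iff.mpr <|
      mem_rootSet.mpr ⟨hirr.ne_zero, hx⟩⟩
  exact .of_separable_splitting_field hirr.separable

end CubicField

section CubicInertia

theorem vieta_of_cubic_roots {R : Type*} [CommRing R] [IsDomain R] {a b c x y z : R}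
    (hx : x ^ 3 + a * x ^ 2 + b * x + c = 0) (hy : y ^ 3 + a * y ^ 2 + b * y + c = 0)
    (hz : z ^ 3 + a * z ^ 2 + b * z + c = 0) (hxy : x ≠ y) (hxz : x ≠ z) (hyz : y ≠ z) :
    a = -(x + y + z) ∧ b = x * y + x * z + y * z ∧ c = -(x * y * z) := by
  have hxy' : x ^ 2 + x * y + y ^ 2 + a * (x + y) + b = 0 :=
    mul_left_cancel₀ (sub_ne_zero.mpr hxy) (by linear_combination hx - hy)
  have hxz' : x ^ 2 + x * z + z ^ 2 + a * (x + z) + b = 0 :=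
    mul_left_cancel₀ (sub_ne_zero.mpr hxz) (by linear_combination hx - hz)
  have ha : a = -(x + y + z) :=
    mul_left_cancel₀ (sub_ne_zero.mpr hyz) (by linear_combination hxy' - hxz')
  have hb : b = x * y + x * z + y * z := by
    linear_combination hxy' - (x + y) * ha
  exact ⟨ha, hb, by linear_combination hx - x ^ 2 * ha - x * hb⟩

theorem exists_mul_eq_and_cubic_eq_zero {R : Type*} [CommRing R] [IsDomain R] [IsIntegrallyClosed R]
    {r a b c x : R} (hr : r ≠ 0)
    (hx : x ^ 3 + r * a * x ^ 2 + r ^ 2 * b * x + r ^ 3 * c = 0) :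
    ∃ y : R, r * y = x ∧ y ^ 3 + a * y ^ 2 + b * y + c = 0 := by
  let φ := algebraMap R (FractionRing R)
  have φ_injective : Function.Injective φ := FaithfulSMul.algebraMap_injective R (FractionRing R)
  have hφr : φ r ≠ 0 := by simpa only [map_zero] using φ_injective.ne hr
  have integral : IsIntegral R (φ x / φ r) := by
    refine ⟨Cubic.toPoly ⟨1, a, b, c⟩, Cubic.monic_of_a_eq_one', ?_⟩
    suffices (φ x / φ r) ^ 3 + φ a * (φ x / φ r) ^ 2 + φ b * (φ x / φ r) + φ c = 0 by
      simpa [Cubic.toPoly] using this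
    have hφx := congrArg φ hx
    simp only [map_add, map_mul, map_pow, map_zero] at hφx
    field_simp
    linear_combination hφx
  obtain ⟨y, hy⟩ := IsIntegrallyClosed.isIntegral_iff.mp integral
  have r_mul_y : r * y = x := φ_injective (by rw [map_mul, hy, mul_div_cancel₀ _ hφr])
  refine ⟨y, r_mul_y, mul_left_cancel₀ (pow_ne_zero 3 hr) ?_⟩
  subst r_mul_y
  linear_combination hx

theorem four_mul_pow_three_sub_sq_notMem {R : Type*} [CommRing R] {p : Ideal R} [p.IsPrime]
    {M k : R} (hM : M ∈ p) (hk : k - 1 ∈ p) : 4 * M ^ 3 - k ^ 2 ∉ p := fun hD ↦ p.one_notMem <| by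
  convert sub_mem (sub_mem (p.mul_mem_left (4 * M ^ 2) hM) hD) (p.mul_mem_left (k + 1) hk) using 1
  ring

-- Written for `x = (θ - 1) s`, so that `x / 3` is a root of a monic cubic with coefficients in `R`.
theorem sub_one_mul_cubic_eq_zero {R : Type*} [CommRing R] {D M k s c θ : R} (hs : s ^ 2 = 3 * D)
    (hc : 1 - 3 * M - k = 9 * c) (hθ : θ ^ 3 - 3 * M * θ - k = 0) :
    ((θ - 1) * s) ^ 3 + 3 * s * ((θ - 1) * s) ^ 2 + 3 ^ 2 * ((1 - M) * D) * ((θ - 1) * s) +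
      3 ^ 3 * (c * s * D) = 0 := by
  linear_combination s ^ 3 * hθ - s * (3 * (1 - M) * (θ - 1) + 9 * c) * hs - s ^ 3 * hc

variable {A B G : Type*} [CommRing A] [CommRing B] [IsDomain B] [Algebra A B] [Group G]
  [MulSemiringAction G B] [SMulCommClass G A B] {P : Ideal B} {σ : G}

theorem mem_of_mem_inertia_of_cubic_root (hσ : σ ∈ P.inertia G) (hσ₃ : σ ^ 3 = 1) {a b c : A}
    {x : B} (hx : x ^ 3 + algebraMap A B a * x ^ 2 + algebraMap A B b * x + algebraMap A B c = 0)
    (hσx : σ • x ≠ x) :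
    3 * x + algebraMap A B a ∈ P ∧ algebraMap A B b - 3 * x ^ 2 ∈ P ∧
      x ^ 3 + algebraMap A B c ∈ P := by
  have smul_root {y : B}
      (hy : y ^ 3 + algebraMap A B a * y ^ 2 + algebraMap A B b * y + algebraMap A B c = 0) :
      (σ • y) ^ 3 + algebraMap A B a * (σ • y) ^ 2 + algebraMap A B b * (σ • y) +
        algebraMap A B c = 0 := by
    simpa only [smul_add, smul_mul', smul_pow', smul_algebraMap, smul_zero]
      using congrArg (σ • ·) hy
  have hσσx : σ • σ • x ≠ x := fun h ↦ hσx <| by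
    calc σ • x = σ • σ • σ • x := by rw [h]
      _ = x := by rw [smul_smul, smul_smul, ← pow_three', hσ₃, one_smul]
  obtain ⟨ha, hb, hc⟩ := vieta_of_cubic_roots hx (smul_root hx) (smul_root (smul_root hx))
    hσx.symm hσσx.symm fun h ↦ hσx (smul_left_cancel σ h.symm)
  have mk_smul (y : B) : Ideal.Quotient.mk P (σ • y) = Ideal.Quotient.mk P y :=
    Ideal.Quotient.eq.mpr (hσ y)
  simp only [ha, hb, hc, ← Ideal.Quotient.eq_zero_iff_mem, map_add, map_sub, map_neg, map_mul,
    map_pow, mk_smul, map_ofNat]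
  exact ⟨by ring, by ring, by ring⟩

theorem three_mem_of_mem_inertia [P.IsPrime] {M k : A} (hcop : IsCoprime M k) {θ : B}
    (hθ : θ ^ 3 - 3 * algebraMap A B M * θ - algebraMap A B k = 0) (hσ₃ : σ ^ 3 = 1)
    (hσθ : σ • θ ≠ θ) (hσ : σ ∈ P.inertia G) : 3 ∈ P := by
  obtain ⟨h₂, h₁, h₀⟩ := mem_of_mem_inertia_of_cubic_root hσ hσ₃ (a := 0) (b := -(3 * M)) (c := -k)
    (by simp only [map_neg, map_mul, map_ofNat, map_zero]; linear_combination hθ) hσθ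
  by_contra three_notMem
  have mem_of_three_mul_mem {y : B} (hy : 3 * y ∈ P) : y ∈ P :=
    (Ideal.IsPrime.mem_or_mem ‹_› hy).resolve_left three_notMem
  have θ_mem : θ ∈ P := mem_of_three_mul_mem (by rwa [map_zero, add_zero] at h₂)
  have M_mem : M ∈ P.under A := mem_of_three_mul_mem <| by
    convert P.neg_mem (P.add_mem h₁ (P.mul_mem_left (3 * θ) θ_mem)) using 1
    simp only [map_neg, map_mul, map_ofNat]
    ring
  have k_mem : k ∈ P.under A := by
    rw [Ideal.under, Ideal.mem_comap]
    convert P.sub_mem (P.mul_mem_left (θ ^ 2) θ_mem) h₀ using 1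
    rw [map_neg]
    ring
  exact Ideal.IsPrime.notMem_of_isCoprime_of_mem hcop M_mem k_mem

theorem three_notMem_of_mem_inertia [IsIntegrallyClosed B] [P.IsPrime] (h3 : (3 : B) ≠ 0)
    {M k s : A} (hM : 3 ∣ M) (hk : 9 ∣ k - 1) (hs : s ^ 2 = 3 * (4 * M ^ 3 - k ^ 2)) {θ : B}
    (hθ : θ ^ 3 - 3 * algebraMap A B M * θ - algebraMap A B k = 0) (hσ₃ : σ ^ 3 = 1)
    (hσθ : σ • θ ≠ θ) (hσ : σ ∈ P.inertia G) : 3 ∉ P := by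
  intro three_mem
  have three_mem_under : 3 ∈ P.under A := by rwa [Ideal.under, Ideal.mem_comap, map_ofNat]
  have M_mem : M ∈ P.under A := Ideal.mem_of_dvd _ hM three_mem_under
  have one_sub_M_notMem : 1 - M ∉ P.under A := fun h ↦ (P.under A).one_notMem <| by
    simpa only [sub_add_cancel] using add_mem h M_mem
  have D_notMem : 4 * M ^ 3 - k ^ 2 ∉ P.under A := four_mul_pow_three_sub_sq_notMem M_mem <|
    Ideal.mem_of_dvd _ (Dvd.dvd.trans ⟨3, by norm_num⟩ hk) three_mem_under
  generalize 4 * M ^ 3 - k ^ 2 = D at hs D_notMem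
  obtain ⟨c, hc⟩ : 9 ∣ 1 - 3 * M - k := by
    obtain ⟨M', rfl⟩ := hM
    obtain ⟨k', hk'⟩ := hk
    exact ⟨-(M' + k'), by linear_combination -hk'⟩
  replace hs : algebraMap A B s ^ 2 = 3 * algebraMap A B D := by
    simpa only [map_mul, map_pow, map_ofNat] using congrArg (algebraMap A B) hs
  replace hc : 1 - 3 * algebraMap A B M - algebraMap A B k = 9 * algebraMap A B c := by
    simpa only [map_mul, map_sub, map_one, map_ofNat] using congrArg (algebraMap A B) hc
  obtain ⟨ζ, three_mul_ζ, hζ⟩ :=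
    exists_mul_eq_and_cubic_eq_zero h3 (sub_one_mul_cubic_eq_zero hs hc hθ)
  have s_ne_zero : algebraMap A B s ≠ 0 := fun h ↦ D_notMem <| by
    rw [Ideal.under, Ideal.mem_comap]
    rw [h, zero_pow two_ne_zero] at hs
    rw [(mul_eq_zero.mp hs.symm).resolve_left h3]
    exact P.zero_mem
  have hσζ : σ • ζ ≠ ζ := fun h ↦ hσθ <| by
    have smul_three : σ • (3 : B) = 3 := by simpa only [map_ofNat] using smul_algebraMap σ (3 : A)
    refine sub_left_injective (b := 1) (mul_right_cancel₀ s_ne_zero ?_)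
    calc (σ • θ - 1) * algebraMap A B s = σ • ((θ - 1) * algebraMap A B s) := by
          rw [smul_mul', smul_sub, smul_one, smul_algebraMap]
      _ = (θ - 1) * algebraMap A B s := by rw [← three_mul_ζ, smul_mul', smul_three, h]
  obtain ⟨-, h₁, -⟩ := mem_of_mem_inertia_of_cubic_root hσ hσ₃ (a := s) (b := (1 - M) * D)
    (c := c * s * D) (by simpa only [map_mul, map_sub, map_one] using hζ) hσζ
  have mul_mem : (1 - M) * D ∈ P.under A :=
    (Submodule.sub_mem_iff_left P (P.mul_mem_right _ three_mem)).mp h₁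
  exact (Ideal.IsPrime.mem_or_mem inferInstance mul_mem).elim one_sub_M_notMem D_notMem

end CubicInertia

section CardanoCubic

open Polynomial

/-- The cubic `X³ - 3MX - k`. By Cardano's formula its roots are the sums `u + v` with `uv = M` and
`u³ + v³ = k`; its discriminant is `27 (4M³ - k²)`. -/
def cardanoCubic {R : Type*} [CommRing R] (M k : R) : Cubic R := ⟨1, 0, -(3 * M), -k⟩

theorem aeval_cardanoCubic {R S : Type*} [CommRing R] [CommRing S] [Algebra R S] (M k : R) (x : S) :
    aeval x (cardanoCubic M k).toPoly = x ^ 3 - 3 * algebraMap R S M * x - algebraMap R S k := by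
  simp [cardanoCubic, Cubic.toPoly, map_ofNat, sub_eq_add_neg]

theorem map_cardanoCubic {R S : Type*} [CommRing R] [CommRing S] (φ : R →+* S) (M k : R) :
    (cardanoCubic M k).map φ = cardanoCubic (φ M) (φ k) := by
  simp [cardanoCubic, Cubic.map, map_ofNat]

theorem monic_cardanoCubic {R : Type*} [CommRing R] (M k : R) : (cardanoCubic M k).toPoly.Monic :=
  Cubic.monic_of_a_eq_one'

theorem isSquare_discr_cardanoCubic {R : Type*} [CommRing R] {M k s : R}
    (hs : s ^ 2 = 3 * (4 * M ^ 3 - k ^ 2)) : IsSquare (cardanoCubic M k).discr :=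
  ⟨3 * s, by simp only [cardanoCubic, Cubic.discr]; linear_combination -9 * hs⟩

variable {K L : Type*} [Field K] [NumberField K] [Field L] [NumberField L] [Algebra K L]

theorem ramificationIdx_eq_one_of_cardanoCubic_root [IsGalois K L] (hrank : finrank K L = 3)
    {M k s : 𝓞 K} (hM : 3 ∣ M) (hk : 9 ∣ k - 1) (hcop : IsCoprime M k)
    (hs : s ^ 2 = 3 * (4 * M ^ 3 - k ^ 2)) {θ : 𝓞 L}
    (hθ : aeval θ (cardanoCubic M k).toPoly = 0) (htop : Algebra.adjoin K {(θ : L)} = ⊤)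
    (P : Ideal (𝓞 L)) (hP : P.IsPrime) (hP₀ : P ≠ ⊥) : P.ramificationIdx (𝓞 K) = 1 := by
  rw [aeval_cardanoCubic] at hθ
  have : Finite (P.under (𝓞 K)).ResidueField := by
    have : (P.under (𝓞 K)).IsMaximal := Ring.DimensionLEOne.maximalOfPrime
      (Ideal.IsIntegral.comap_ne_bot _ hP₀) inferInstance
    have : Finite (𝓞 K ⧸ P.under (𝓞 K)) :=
      Ring.HasFiniteQuotients.finiteQuotient (Ideal.IsIntegral.comap_ne_bot _ hP₀)
    exact .of_surjective _ (Ideal.bijective_algebraMap_quotient_residueField _).2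
  refine ramificationIdx_eq_one_of_inertia_eq_bot (G := Gal(L/K)) <|
    (Subgroup.eq_bot_iff_forall _).mpr fun σ hσ ↦ ?_
  by_contra σ_ne_one
  have σ_pow_three : σ ^ 3 = 1 := by
    rw [← hrank, ← IsGalois.card_aut_eq_finrank, pow_card_eq_one']
  have hσθ : σ • θ ≠ θ := fun h ↦ σ_ne_one <| AlgEquiv.coe_toAlgHom_injective <|
    AlgHom.ext_of_adjoin_eq_top htop <| by
      rintro _ rfl
      exact congrArg (algebraMap (𝓞 L) L) h
  exact three_notMem_of_mem_inertia (by norm_num) hM hk hs hθ σ_pow_three hσθ hσ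
    (three_mem_of_mem_inertia hcop hθ σ_pow_three hσθ hσ)

theorem three_dvd_classNumber_of_irreducible_cardanoCubic {M k s : 𝓞 K} (hM : 3 ∣ M)
    (hk : 9 ∣ k - 1) (hcop : IsCoprime M k) (hs : s ^ 2 = 3 * (4 * M ^ 3 - k ^ 2))
    (hirr : Irreducible (cardanoCubic (M : K) (k : K)).toPoly)
    (htors : ¬ 3 ∣ Units.torsionOrder K) : 3 ∣ classNumber K := by
  have : Fact (Irreducible (cardanoCubic (M : K) (k : K)).toPoly) := ⟨hirr⟩
  let L := AdjoinRoot (cardanoCubic (M : K) (k : K)).toPoly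
  have : Module.Finite K L := (monic_cardanoCubic _ _).finite_adjoinRoot
  have : NumberField L := NumberField.of_module_finite K L
  have hrank : finrank K L = 3 := by
    rw [(AdjoinRoot.powerBasis hirr.ne_zero).finrank, AdjoinRoot.powerBasis_dim]
    exact Cubic.natDegree_of_a_ne_zero' one_ne_zero
  let t : L := AdjoinRoot.root _
  have ht : aeval t (cardanoCubic M k).toPoly = 0 := by
    rw [← aeval_map_algebraMap K, ← Cubic.map_toPoly, map_cardanoCubic]
    exact (AdjoinRoot.aeval_eq _).trans AdjoinRoot.mk_self
  let θ : 𝓞 L := ⟨t, isIntegral_trans (R := ℤ) (A := 𝓞 K) t ⟨_, monic_cardanoCubic M k, ht⟩⟩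
  have hθ : aeval θ (cardanoCubic M k).toPoly = 0 := RingOfIntegers.coe_injective <| by
    rw [← aeval_algebraMap_apply]
    exact ht
  have htop : Algebra.adjoin K {t} = ⊤ := AdjoinRoot.adjoinRoot_eq_top
  have hs' : (s : K) ^ 2 = 3 * (4 * (M : K) ^ 3 - (k : K) ^ 2) := by
    simpa only [map_mul, map_sub, map_pow, map_ofNat] using congrArg (algebraMap (𝓞 K) K) hs
  have : IsGalois K L := isGalois_of_isSquare_discr one_ne_zero hirr
    (isSquare_discr_cardanoCubic hs') (AdjoinRoot.eval₂_root _) htop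
  rw [← hrank]
  refine prime_finrank_dvd_classNumber_of_ramificationIdx_eq_one (L := L) ?_ ?_
    (ramificationIdx_eq_one_of_cardanoCubic_root hrank hM hk hcop hs hθ htop)
  · exact hrank ▸ Nat.prime_three
  · rw [hrank]
    exact (Nat.prime_three.coprime_iff_not_dvd.mpr htors).symm

end CardanoCubic

section QuadraticField

open Polynomial

variable {F K : Type*} [Field F] [Field K] [Algebra F K]

theorem irreducible_toPoly_iff_forall_eval_ne_zero {P : Cubic F} (ha : P.a ≠ 0) :
    Irreducible P.toPoly ↔ ∀ x, P.toPoly.eval x ≠ 0 := by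
  have natDegree_eq : P.toPoly.natDegree = 3 := Cubic.natDegree_of_a_ne_zero ha
  rw [irreducible_iff_roots_eq_zero_of_degree_le_three (by lia) natDegree_eq.le,
    Multiset.eq_zero_iff_forall_notMem]
  simp only [mem_roots (ne_zero_of_natDegree_gt (natDegree_eq ▸ three_pos)), IsRoot.def, ne_eq]

theorem irreducible_map_toPoly_of_finrank_eq_two {P : Cubic F} (ha : P.a ≠ 0)
    (hirr : Irreducible P.toPoly) (hrank : finrank F K = 2) :
    Irreducible (P.map (algebraMap F K)).toPoly := by
  have : FiniteDimensional F K := .of_finrank_pos (by lia)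
  refine (irreducible_toPoly_iff_forall_eval_ne_zero ((_root_.map_ne_zero _).mpr ha)).mpr
    fun x hx ↦ ?_
  rw [Cubic.map_toPoly, eval_map_algebraMap] at hx
  have natDegree_le := minpoly.natDegree_le (A := F) x
  rw [← minpoly.eq_of_irreducible hirr hx,
    natDegree_mul_C (inv_ne_zero (leadingCoeff_ne_zero.mpr hirr.ne_zero)),
    Cubic.natDegree_of_a_ne_zero ha, hrank] at natDegree_le
  lia

theorem irreducible_cardanoCubic_rat {M k : ℤ} (hM : Odd M) (hk : Odd k) :
    Irreducible (cardanoCubic (M : ℚ) k).toPoly := by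
  refine (irreducible_toPoly_iff_forall_eval_ne_zero one_ne_zero).mpr fun q hq ↦ ?_
  rw [← eq_intCast (algebraMap ℤ ℚ), ← eq_intCast (algebraMap ℤ ℚ), ← map_cardanoCubic,
    Cubic.map_toPoly, eval_map_algebraMap] at hq
  obtain ⟨r, rfl⟩ := IsIntegrallyClosed.isIntegral_iff.mp ⟨_, monic_cardanoCubic M k, hq⟩
  rw [aeval_algebraMap_eq_zero_iff, aeval_cardanoCubic] at hq
  have root_int : r ^ 3 - 3 * M * r - k = 0 := hq
  have root_mod_two := congrArg (Int.cast : ℤ → ZMod 2) root_int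
  push_cast [hM.intCast_zmod_two, hk.intCast_zmod_two] at root_mod_two
  exact (by decide : ∀ x : ZMod 2, x ^ 3 - 3 * 1 * x - 1 ≠ 0) _ root_mod_two

theorem exists_algebraMap_add_mul_eq_of_finrank_eq_two (hrank : finrank F K = 2) {x : K}
    (hx : x ∉ (algebraMap F K).range) (y : K) :
    ∃ a b : F, algebraMap F K a + algebraMap F K b * x = y := by
  have linearIndependent : LinearIndependent F ![1, x] :=
    (LinearIndependent.pair_iff' one_ne_zero).mpr fun a ha ↦
      hx ⟨a, (Algebra.algebraMap_eq_smul_one a).trans ha⟩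
  have span_eq_top : Submodule.span F {1, x} = ⊤ := by
    simpa [Set.pair_comm] using linearIndependent.span_eq_top_of_card_eq_finrank (by simp [hrank])
  obtain ⟨a, b, h⟩ := Submodule.mem_span_pair.mp (span_eq_top ▸ Submodule.mem_top (x := y))
  exact ⟨a, b, by rw [← h, Algebra.smul_def, Algebra.smul_def, mul_one]⟩

theorem mul_mem_range_algebraMap_of_sq_mem (h2 : (2 : F) ≠ 0) (hrank : finrank F K = 2) {x y : K}
    (hx : x ∉ (algebraMap F K).range) (hy : y ∉ (algebraMap F K).range)
    (hx2 : x ^ 2 ∈ (algebraMap F K).range) (hy2 : y ^ 2 ∈ (algebraMap F K).range) :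
    x * y ∈ (algebraMap F K).range := by
  obtain ⟨a, b, rfl⟩ := exists_algebraMap_add_mul_eq_of_finrank_eq_two hrank hx y
  obtain ⟨c, hc⟩ := hx2
  obtain ⟨d, hd⟩ := hy2
  have cross_term : algebraMap F K (2 * a * b) * x = algebraMap F K (d - a ^ 2 - b ^ 2 * c) := by
    simp only [map_mul, map_sub, map_pow, map_ofNat]
    linear_combination -hd + algebraMap F K b ^ 2 * hc
  have cross_coeff : 2 * a * b = 0 := by
    by_contra h
    refine hx ⟨(d - a ^ 2 - b ^ 2 * c) / (2 * a * b), ?_⟩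
    rw [map_div₀, ← cross_term, mul_div_cancel_left₀ _ ((_root_.map_ne_zero _).mpr h)]
  have hb : b ≠ 0 := by
    rintro rfl
    exact hy ⟨a, by simp⟩
  obtain rfl : a = 0 := by simpa [h2, hb] using cross_coeff
  exact ⟨b * c, by rw [map_mul, hc, map_zero]; ring⟩

end QuadraticField

section QuadraticNumberField

variable {K : Type*} [Field K] [NumberField K]

theorem notMem_range_algebraMap_rat_of_sq_eq {d : ℤ} {s : K} (hs : s ^ 2 = d)
    (hd : ¬ IsSquare d) : s ∉ (algebraMap ℚ K).range := by
  rintro ⟨q, rfl⟩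
  have hq : q ^ 2 = d := (algebraMap ℚ K).injective (by simpa using hs)
  exact hd (Rat.isSquare_intCast_iff.mp ⟨q, by rw [← hq, sq]⟩)

theorem exists_sq_add_self_add_one_eq_zero_of_three_dvd_torsionOrder
    (h : 3 ∣ Units.torsionOrder K) : ∃ ω : K, ω ^ 2 + ω + 1 = 0 := by
  obtain ⟨ζ, hζ⟩ := exists_prime_orderOf_dvd_card' 3 h
  have isPrimitiveRoot : IsPrimitiveRoot ζ 3 := hζ ▸ .orderOf ζ
  have isPrimitiveRoot_coe : IsPrimitiveRoot (((ζ : (𝓞 K)ˣ) : 𝓞 K) : K) 3 :=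
    (IsPrimitiveRoot.coe_units_iff.mpr (IsPrimitiveRoot.coe_submonoidClass_iff.mpr isPrimitiveRoot))
      |>.map_of_injective RingOfIntegers.coe_injective
  refine ⟨((ζ : (𝓞 K)ˣ) : 𝓞 K), ?_⟩
  rw [← isPrimitiveRoot_coe.geom_sum_eq_zero (by norm_num)]
  simp only [Finset.sum_range_succ, Finset.sum_range_zero]
  ring

theorem not_three_dvd_torsionOrder_of_sq_eq (hrank : finrank ℚ K = 2) {d : ℤ} {s : K}
    (hs : s ^ 2 = d) (hd : ¬ IsSquare d) (hd' : ¬ IsSquare (-3 * d)) :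
    ¬ 3 ∣ Units.torsionOrder K := fun h ↦ by
  obtain ⟨ω, hω⟩ := exists_sq_add_self_add_one_eq_zero_of_three_dvd_torsionOrder h
  have sqrt_neg_three : (2 * ω + 1) ^ 2 = ((-3 : ℤ) : K) := by
    push_cast
    linear_combination 4 * hω
  have neg_three_not_isSquare : ¬ IsSquare (-3 : ℤ) := fun h ↦ absurd h.nonneg (by decide)
  have sqrt_mul_sq : ((2 * ω + 1) * s) ^ 2 = ((-3 * d : ℤ) : K) := by
    rw [mul_pow, sqrt_neg_three, hs, Int.cast_mul]
  refine notMem_range_algebraMap_rat_of_sq_eq sqrt_mul_sq hd' ?_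
  exact mul_mem_range_algebraMap_of_sq_mem two_ne_zero hrank
    (notMem_range_algebraMap_rat_of_sq_eq sqrt_neg_three neg_three_not_isSquare)
    (notMem_range_algebraMap_rat_of_sq_eq hs hd) ⟨-3, by simp [sqrt_neg_three]⟩
    ⟨(d : ℚ), by simp [hs]⟩

theorem not_isSquare_three_mul_four_mul_pow_sub_sq {M k : ℤ} (hM : 3 ∣ M) (hk : 9 ∣ k - 1) :
    ¬ IsSquare (3 * (4 * M ^ 3 - k ^ 2)) := by
  rintro ⟨x, hx⟩
  obtain ⟨c, rfl⟩ := hM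
  obtain ⟨b, hb⟩ := hk
  obtain rfl : k = 9 * b + 1 := by linarith
  have hx_mod := congrArg (Int.cast : ℤ → ZMod 9) hx
  push_cast at hx_mod
  exact (by decide : ∀ b c x : ZMod 9,
    3 * (4 * (3 * c) ^ 3 - (9 * b + 1) ^ 2) ≠ x * x) _ _ _ hx_mod

theorem not_isSquare_neg_three_mul_three_mul_four_mul_pow_sub_sq {M k : ℤ} (hM : Odd M)
    (hk : Odd k) : ¬ IsSquare (-3 * (3 * (4 * M ^ 3 - k ^ 2))) := by
  rintro ⟨x, hx⟩
  obtain ⟨a, rfl⟩ := hM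
  obtain ⟨b, rfl⟩ := hk
  have hx_mod := congrArg (Int.cast : ℤ → ZMod 8) hx
  push_cast at hx_mod
  exact (by decide : ∀ a b x : ZMod 8,
    -3 * (3 * (4 * (2 * a + 1) ^ 3 - (2 * b + 1) ^ 2)) ≠ x * x) _ _ _ hx_mod

theorem three_dvd_classNumber_of_sq_eq_three_mul {M k : ℤ} (hModd : Odd M) (hkodd : Odd k)
    (hM : 3 ∣ M) (hk : 9 ∣ k - 1) (hcop : IsCoprime M k) (hrank : finrank ℚ K = 2) {s : K}
    (hs : s ^ 2 = 3 * (4 * M ^ 3 - k ^ 2)) : 3 ∣ classNumber K := by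
  have hs_int : s ^ 2 = ((3 * (4 * M ^ 3 - k ^ 2) : ℤ) : K) := by
    rw [hs]
    push_cast
    rfl
  obtain ⟨s, rfl⟩ : ∃ x : 𝓞 K, (x : K) = s :=
    ⟨⟨s, .of_pow two_pos (hs_int ▸ isIntegral_algebraMap)⟩, rfl⟩
  have irreducible_cubic : Irreducible (cardanoCubic (M : K) k).toPoly := by
    simpa [map_cardanoCubic] using irreducible_map_toPoly_of_finrank_eq_two (K := K) one_ne_zero
      (irreducible_cardanoCubic_rat hModd hkodd) hrank
  refine three_dvd_classNumber_of_irreducible_cardanoCubic (M := (M : 𝓞 K)) (k := (k : 𝓞 K))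
    (s := s) (by exact_mod_cast Int.cast_dvd_cast _ _ hM)
    (by exact_mod_cast Int.cast_dvd_cast _ _ hk) hcop.intCast ?_
    (by simpa using irreducible_cubic) ?_
  · exact RingOfIntegers.coe_injective (by simpa [map_ofNat] using hs)
  · exact not_three_dvd_torsionOrder_of_sq_eq hrank hs_int
      (not_isSquare_three_mul_four_mul_pow_sub_sq hM hk)
      (not_isSquare_neg_three_mul_three_mul_four_mul_pow_sub_sq hModd hkodd)

end QuadraticNumberField

theorem class_number_div_three_of_sqrt_sqfree_part_three_mul_four_pow_sub_sq_general {M k : ℤ}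
    (hModd : Odd M) (hM : 3 ∣ M) (hk : k ≡ 1 [ZMOD 18] ∨ k ≡ -1 [ZMOD 18]) (hcop : IsCoprime M k)
    {K : Type*} [Field K] [NumberField K] (hrank : finrank ℚ K = 2) {s : K}
    (hs : s ^ 2 = 3 * (4 * M ^ 3 - k ^ 2)) : 3 ∣ classNumber K := by
  rcases hk with hk | hk
  · have := hk.dvd
    exact three_dvd_classNumber_of_sq_eq_three_mul hModd (by grind) hM (by lia) hcop hrank hs
  · have := hk.dvd
    exact three_dvd_classNumber_of_sq_eq_three_mul (k := -k) hModd (by grind) hM (by lia)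
      hcop.neg_right hrank (by rw [hs]; push_cast; ring)

/-- Let `m` and `n` be positive integers with `m` odd and `m ≡ 0 (mod 3)`, and let `k` be an
integer with `k ≡ ±1 (mod 18)` and `gcd(m, k) = 1`.  If `d₁` is the squarefree part of
`3 * (4 * m ^ (3 * n) - k ^ 2)`, then `3` divides the class number of `ℚ(√d₁)`. -/
theorem class_number_div_three_of_sqrt_sqfree_part_three_mul_four_pow_sub_sq
    (m n : ℕ) (hm : 0 < m) (hn : 0 < n) (hmodd : Odd m) (hm3 : 3 ∣ m)
    (k : ℤ) (hk : k ≡ 1 [ZMOD 18] ∨ k ≡ -1 [ZMOD 18]) (hgcd : Int.gcd (m : ℤ) k = 1)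
    (d₁ : ℤ) (hsf : Squarefree d₁) (t : ℤ) (ht : 0 < t)
    (hpart : 3 * (4 * (m : ℤ) ^ (3 * n) - k ^ 2) = t ^ 2 * d₁)
    (K : Type*) [Field K] [NumberField K] (hdeg : Module.finrank ℚ K = 2)
    (hsqrt : ∃ α : K, α ^ 2 = (d₁ : K)) :
    3 ∣ NumberField.classNumber K := by
  obtain ⟨α, hα⟩ := hsqrt
  refine class_number_div_three_of_sqrt_sqfree_part_three_mul_four_pow_sub_sq_general
    (M := (m : ℤ) ^ n) (s := t * α) hmodd.natCast.pow
    (dvd_pow (Int.natCast_dvd_natCast.mpr hm3) hn.ne') hk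
    (Int.isCoprime_iff_gcd_eq_one.mpr hgcd).pow_left hdeg ?_
  rw [mul_pow, hα, Int.cast_pow, ← pow_mul, mul_comm n]
  exact_mod_cast hpart.symm
end

section
/- Let m and n be odd positive integers with m ≡ 0 (mod 3) and with 3 dividing n exactly once (that is, 3 ∣ n and 9 ∤ n). Then 3 divides the class number of the quadratic field ℚ(√(−(m²n² − 4n)/3)). -/
/-!
Put `c = m² n / 27`. The cubic `P = X³ + X² - c` has discriminant `4 c - 27 c²`, which is a square
in `K`, so a root of `P` generates a cyclic cubic extension `L` of `K`. The values of the
derivative of `P` at its three roots add up to `1`, so `L / K` is unramified. The argument of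
Hilbert's Theorem 94 then produces a class of order three. The unit group of `K` is finite of
order prime to `3`, whereas `L` has units of infinite order; hence some unit `η` of `L` of norm
one is not of the form `e / σ e` with `e` a unit, where `σ` generates the Galois group. By
Hilbert's Theorem 90, `η = α / σ α` for some integer `α` of `L`. The ideal `(α)` is Galois stable,
so it is extended from an ideal `J` of `K`. Taking norms, `J³` is principal; but a generator of
`J` would differ from `α` by a unit `e` with `η = e / σ e`.
-/

open Finset Module NumberField Polynomial
open scoped Pointwise

/-! ### Norm-one elements that are not coboundaries -/

theorem exists_one_sub_pow_prime_eq_mul {R : Type*} [Ring R] {p : ℕ} (hp : p.Prime) {φ : R}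
    (hφ : φ ^ p = 1) : ∃ r, (1 - φ) ^ p = p * r := by
  obtain ⟨r, hr⟩ := ((Commute.one_left φ).sub_left (Commute.refl φ)).exists_add_pow_prime_eq hp
  rw [sub_add_cancel, one_pow, hφ] at hr
  exact ⟨-((1 - φ) * φ * r), by linear_combination (norm := noncomm_ring) -hr⟩

theorem exists_pow_nsmul_eq_pow_apply {A : Type*} [AddCommGroup A] {w : ℕ} {ψ : AddMonoid.End A}
    (hψ : ∀ a, ∃ e, w • a = ψ e) (k : ℕ) (a : A) : ∃ e, w ^ k • a = (ψ ^ k) e := by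
  induction k generalizing a with
  | zero => exact ⟨a, by simp⟩
  | succ k ih =>
    obtain ⟨e, he⟩ := ih a
    obtain ⟨f, hf⟩ := hψ e
    exact ⟨f, by rw [pow_succ', mul_nsmul', he, ← map_nsmul, hf, pow_succ]; rfl⟩

theorem exists_pow_nsmul_eq_prime_nsmul {A : Type*} [AddCommGroup A] {p : ℕ} (hp : p.Prime)
    {φ : AddMonoid.End A} (hφ : φ ^ p = 1) {w : ℕ} (hw : ∀ a, ∃ e, w • a = e - φ e) (a : A) :
    ∃ b, w ^ p • a = p • b := by
  obtain ⟨r, hr⟩ := exists_one_sub_pow_prime_eq_mul hp hφ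
  obtain ⟨e, he⟩ := exists_pow_nsmul_eq_pow_apply (ψ := 1 - φ) hw p a
  exact ⟨r e, by rw [he, hr]; simp⟩

/-- If every element of the kernel of `f` were of the form `e / φ e`, then multiplication by `w`
would factor through `1 - φ`, hence that by `w ^ p` through `(1 - φ) ^ p`, a multiple of `p`. -/
theorem exists_map_eq_one_and_mul_ne {M N : Type*} [CommGroup M] [Group N] {p w : ℕ}
    (hp : p.Prime) {φ : Monoid.End M} (hφ : φ ^ p = 1) (f : M →* N) (hf : ∀ u, f u ^ w = 1)
    (hpow : ∃ u : M, ∀ v : M, u ^ w ^ p ≠ v ^ p) : ∃ η : M, f η = 1 ∧ ∀ e, η * φ e ≠ e := by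
  by_contra! hcob
  obtain ⟨u, hu⟩ := hpow
  obtain ⟨v, hv⟩ := exists_pow_nsmul_eq_prime_nsmul hp (φ := monoidEndToAdditive M φ) (w := w)
    (by rw [← map_pow, hφ, map_one])
    (fun u ↦ by
      obtain ⟨e, he⟩ := hcob (u.toMul ^ w) (by rw [map_pow, hf])
      exact ⟨.ofMul e, Additive.toMul.injective (eq_div_of_mul_eq' he)⟩)
    (.ofMul u)
  exact hu v.toMul hv

theorem exists_ne_zero_mul_smul_eq {G B : Type*} [Group G] [Fintype G] [CommRing B] [IsDomain B]
    [MulSemiringAction G B] [FaithfulSMul G B] {σ : G} (hσ : ∀ g, g ∈ Subgroup.zpowers σ) {x : B}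
    (hx : ∏ g : G, g • x = 1) : ∃ y ≠ 0, x * σ • y = y := by
  classical
  let c (i : ℕ) : B := ∏ j ∈ range i, σ ^ j • x
  have hc (i : ℕ) : x * σ • c i = c (i + 1) := by
    simp only [c, prod_range_succ', smul_prod', smul_smul, ← pow_succ', pow_zero, one_smul]
    exact mul_comm _ _
  have hcn : c (orderOf σ) = 1 := by
    rw [← hx, ← IsCyclic.image_range_orderOf hσ, prod_image]
    rw [coe_range]; exact pow_injOn_Iio_orderOf
  let y (z : B) : B := ∑ i ∈ range (orderOf σ), c i * σ ^ i • z
  have hy (z : B) : x * σ • y z = y z := by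
    have hshift : x * σ • y z = ∑ i ∈ range (orderOf σ), c (i + 1) * σ ^ (i + 1) • z := by
      simp only [y, smul_sum, smul_mul', mul_sum, ← mul_assoc, hc, smul_smul, ← pow_succ']
    have hends := (sum_range_succ' (fun i ↦ c i * σ ^ i • z) (orderOf σ)).symm.trans
      (sum_range_succ _ _)
    rw [hcn, pow_orderOf_eq_one, pow_zero, show c 0 = 1 from prod_range_zero _] at hends
    rw [hshift, add_right_cancel hends]
  obtain ⟨z, hz⟩ : ∃ z, y z ≠ 0 := by
    by_contra! hy0
    let f (i : Fin (orderOf σ)) : B →* B := MulSemiringAction.toRingHom G B (σ ^ (i : ℕ))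
    have hf : Function.Injective f := fun i j hij ↦ Fin.ext <| pow_injOn_Iio_orderOf i.2 j.2 <|
      FaithfulSMul.eq_of_smul_eq_smul fun b ↦ DFunLike.congr_fun hij b
    have hli := Fintype.linearIndependent_iff.1 ((linearIndependent_monoidHom B B).comp f hf)
      (fun i ↦ c i) (funext fun z ↦ by
        simpa [Fin.sum_univ_eq_sum_range (fun i ↦ c i * σ ^ i • z), f, y] using hy0 z)
      ⟨0, orderOf_pos σ⟩
    exact one_ne_zero hli
  exact ⟨y z, hz, hy z⟩

/-! ### Descent of ideals in unramified extensions -/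

open Classical in
/-- The ideal generated by the differents `∏_{g ≠ 1} (t - g • t)` of the elements `t` of a ring with
an action of a finite group. It is used to express that the ring is unramified over the invariants
without mentioning primes. -/
noncomputable def elementDifferentIdeal (G B : Type*) [Group G] [Fintype G] [CommRing B]
    [MulSemiringAction G B] : Ideal B :=
  Ideal.span (Set.range fun t : B ↦ ∏ g ∈ univ.erase (1 : G), (t - g • t))

/-- The polynomial vanishes at every conjugate of `t` except `t` itself, so the multiples of
`∏_{g ≠ 1} (t - g • t)` are combinations of traces. -/
theorem sum_coeff_mul_sum_smul_eq {G B : Type*} [Group G] [Fintype G] [DecidableEq G] [CommRing B]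
    [MulSemiringAction G B] (t z : B) :
    ((∏ g ∈ univ.erase (1 : G), (X - C (g • t))).sum fun k a ↦ a * ∑ g : G, g • (z * t ^ k)) =
      z * ∏ g ∈ univ.erase (1 : G), (t - g • t) := by
  set q : B[X] := ∏ g ∈ univ.erase (1 : G), (X - C (g • t))
  calc (q.sum fun k a ↦ a * ∑ g : G, g • (z * t ^ k))
      = ∑ g : G, g • z * q.eval (g • t) := by
        simp only [Polynomial.sum, eval_eq_sum, mul_sum, smul_mul', smul_pow']
        rw [sum_comm]
        exact sum_congr rfl fun _ _ ↦ sum_congr rfl fun _ _ ↦ by ring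
    _ = z * ∏ g ∈ univ.erase (1 : G), (t - g • t) := by
        rw [Fintype.sum_eq_single (1 : G), one_smul, one_smul]
        · simp only [q, eval_prod, eval_sub, eval_X, eval_C]
        · intro g hg
          rw [eval_prod, prod_eq_zero (mem_erase.2 ⟨hg, mem_univ g⟩) (by simp), mul_zero]

theorem map_comap_eq_of_elementDifferentIdeal_eq_top {G A B : Type*} [Group G] [Fintype G]
    [CommRing A] [CommRing B] [Algebra A B] [MulSemiringAction G B]
    [Algebra.IsInvariant A B G] (hG : elementDifferentIdeal G B = ⊤) {I : Ideal B}
    (hI : ∀ g : G, ∀ z ∈ I, g • z ∈ I) :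
    (I.comap (algebraMap A B)).map (algebraMap A B) = I := by
  classical
  refine le_antisymm Ideal.map_comap_le fun z hz ↦ ?_
  set J := (I.comap (algebraMap A B)).map (algebraMap A B)
  have trace_mem {w : B} (hw : w ∈ I) : ∑ g : G, g • w ∈ J := by
    obtain ⟨a, ha⟩ := Algebra.IsInvariant.isInvariant (A := A) (G := G) (∑ g : G, g • w) fun h ↦ by
      rw [smul_sum]
      exact Fintype.sum_equiv (Equiv.mulLeft h) _ _ fun _ ↦ smul_smul _ _ _
    rw [← ha]
    refine Ideal.mem_map_of_mem _ (Ideal.mem_comap.2 ?_)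
    rw [ha]
    exact I.sum_mem fun g _ ↦ hI g w hw
  have hle : elementDifferentIdeal G B ≤ J.colon {z} := by
    rw [elementDifferentIdeal, Ideal.span_le]
    rintro _ ⟨t, rfl⟩
    rw [SetLike.mem_coe, Submodule.mem_colon_singleton, smul_eq_mul, mul_comm,
      ← sum_coeff_mul_sum_smul_eq]
    exact J.sum_mem fun k _ ↦ J.mul_mem_left _ (trace_mem (I.mul_mem_right _ hz))
  have hone : (1 : B) ∈ J.colon {z} := hle (by rw [hG]; exact Submodule.mem_top)
  rwa [Submodule.mem_colon_singleton, one_smul] at hone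

theorem smul_span_singleton_eq_of_mul_smul_eq {G B : Type*} [Group G] [CommRing B]
    [MulSemiringAction G B] {α : B} {η : Bˣ} {σ : G} (hσ : ∀ g, g ∈ Subgroup.zpowers σ)
    (hα : η * σ • α = α) (g : G) : g • Ideal.span {α} = Ideal.span {α} := by
  suffices Subgroup.zpowers σ ≤ MulAction.stabilizer G (Ideal.span {α}) from this (hσ g)
  rw [Subgroup.zpowers_le, MulAction.mem_stabilizer_iff, Ideal.pointwise_smul_def, Ideal.map_span,
    Set.image_singleton, MulSemiringAction.toRingHom_apply,
    ← Ideal.span_singleton_mul_left_unit η.isUnit, hα]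

theorem not_isPrincipal_of_map_eq_span {G A B : Type*} [Group G] [CommRing A] [CommRing B]
    [IsDomain B] [Algebra A B] [MulSemiringAction G B] [SMulCommClass G A B]
    {α : B} (hα0 : α ≠ 0) {η : Bˣ} {σ : G} (hα : η * σ • α = α)
    (hη : ∀ e : Bˣ, (η : B) * σ • (e : B) ≠ e) {J : Ideal A}
    (hJ : J.map (algebraMap A B) = Ideal.span {α}) : ¬ J.IsPrincipal := by
  rintro ⟨b, rfl⟩
  rw [Ideal.submodule_span_eq, Ideal.map_span, Set.image_singleton,
    Ideal.span_singleton_eq_span_singleton] at hJ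
  obtain ⟨e, rfl⟩ := hJ
  refine hη e (mul_left_cancel₀ (left_ne_zero_of_mul hα0) ?_)
  rw [smul_mul', smul_algebraMap] at hα
  rw [mul_left_comm, hα]

theorem pow_finrank_isPrincipal_of_map_eq_span {A B : Type*} [CommRing A] [CommRing B]
    [IsDedekindDomain A] [IsDedekindDomain B] [Algebra A B] [Module.Finite A B]
    [Module.IsTorsionFree A B] {α : B} {J : Ideal A}
    (hJ : J.map (algebraMap A B) = Ideal.span {α}) : (J ^ finrank A B).IsPrincipal := by
  rw [← Ideal.relNorm_algebraMap B J, hJ, Ideal.relNorm_singleton]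
  exact ⟨_, rfl⟩

theorem exists_orderOf_classGroup_eq_card {G A B : Type*} [Group G] [Fintype G] [CommRing A]
    [CommRing B] [IsDedekindDomain A] [IsDedekindDomain B] [Algebra A B] [Module.Finite A B]
    [Module.IsTorsionFree A B] [MulSemiringAction G B] [IsGaloisGroup G A B]
    (hG : elementDifferentIdeal G B = ⊤) (hcard : (Nat.card G).Prime) {σ : G}
    (hσ : ∀ g, g ∈ Subgroup.zpowers σ) {η : Bˣ} (hnorm : ∏ g : G, g • (η : B) = 1)
    (hη : ∀ e : Bˣ, (η : B) * σ • (e : B) ≠ e) :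
    ∃ c : ClassGroup A, orderOf c = Nat.card G := by
  have : FaithfulSMul G B := IsGaloisGroup.faithful A
  obtain ⟨α, hα0, hα⟩ := exists_ne_zero_mul_smul_eq hσ hnorm
  have hJ := map_comap_eq_of_elementDifferentIdeal_eq_top (A := A) hG (I := Ideal.span {α})
    fun g z hz ↦ smul_span_singleton_eq_of_mul_smul_eq hσ hα g ▸
      Ideal.smul_mem_pointwise_smul g z _ hz
  set J := (Ideal.span {α}).comap (algebraMap A B)
  have hJ0 : J ≠ ⊥ := fun h ↦ by
    rw [h, Ideal.map_bot, eq_comm, Ideal.span_singleton_eq_bot] at hJ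
    exact hα0 hJ
  have hJmem : J ∈ nonZeroDivisors (Ideal A) := mem_nonZeroDivisors_of_ne_zero hJ0
  have := Fact.mk hcard
  refine ⟨ClassGroup.mk0 ⟨J, hJmem⟩, orderOf_eq_prime ?_ ?_⟩
  · rw [IsGaloisGroup.card_eq_finrank' G A B, ← map_pow]
    exact (ClassGroup.mk0_eq_one_iff (pow_mem hJmem _)).2
      (pow_finrank_isPrincipal_of_map_eq_span hJ)
  · exact fun h ↦ not_isPrincipal_of_map_eq_span hα0 hα hη hJ
      ((ClassGroup.mk0_eq_one_iff hJmem).1 h)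

/-! ### Unramified cyclic extensions of number fields -/

set_option maxSynthPendingDepth 3 in
theorem exists_unit_pow_ne_pow {L : Type*} [Field L] [NumberField L] (hL : 0 < Units.rank L)
    {k p : ℕ} (hpk : ¬ p ∣ k) : ∃ u : (𝓞 L)ˣ, ∀ g : (𝓞 L)ˣ, u ^ k ≠ g ^ p := by
  let i : Fin (Units.rank L) := ⟨0, hL⟩
  refine ⟨Units.fundSystem L i, fun g hg ↦ hpk ?_⟩
  let coord (v : (𝓞 L)ˣ) : ℤ :=
    (Units.basisModTorsion L).coord i (Additive.ofMul (QuotientGroup.mk v))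
  have coord_pow (v : (𝓞 L)ˣ) (j : ℕ) : coord (v ^ j) = j * coord v := by
    simp only [coord, QuotientGroup.mk_pow, ofMul_pow, map_nsmul, nsmul_eq_mul]
  have coord_fundSystem : coord (Units.fundSystem L i) = 1 := by
    simp only [coord, Units.fundSystem_mk, Module.Basis.coord_apply, Module.Basis.repr_self,
      Finsupp.single_eq_same]
  have hcoord := congrArg coord hg
  rw [coord_pow, coord_pow, coord_fundSystem, mul_one] at hcoord
  exact Int.natCast_dvd_natCast.1 ⟨_, hcoord⟩

theorem unit_pow_torsionOrder_eq_one {K : Type*} [Field K] [NumberField K]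
    (hK : Units.rank K = 0) (u : (𝓞 K)ˣ) : u ^ Units.torsionOrder K = 1 := by
  obtain ⟨⟨ζ, f⟩, hu, -⟩ := Units.exist_unique_eq_mul_prod K u
  have : IsEmpty (Fin (Units.rank K)) := by rw [hK]; infer_instance
  rw [hu, Finset.prod_of_isEmpty, mul_one]
  exact congrArg Subtype.val (pow_card_eq_one' (x := ζ))

theorem units_rank_pos_of_two_lt_finrank {L : Type*} [Field L] [NumberField L]
    (hL : 2 < finrank ℚ L) : 0 < Units.rank L := by
  have h1 := InfinitePlace.card_add_two_mul_card_eq_rank L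
  have h2 := InfinitePlace.card_eq_nrRealPlaces_add_nrComplexPlaces L
  unfold Units.rank
  omega

section

variable {K L : Type*} [Field K] [NumberField K] [Field L] [NumberField L] [Algebra K L]

theorem algebraMap_norm_eq_prod_smul [IsGalois K L] (x : 𝓞 L) :
    algebraMap (𝓞 K) (𝓞 L) (RingOfIntegers.norm K x) = ∏ g : Gal(L/K), g • x := by
  apply RingOfIntegers.ext
  rw [RingOfIntegers.coe_algebraMap_norm, Algebra.norm_eq_prod_automorphisms]
  simp only [map_prod]
  rfl

theorem exists_unit_norm_eq_one_and_mul_smul_ne [IsGalois K L] (hdeg : (finrank K L).Prime)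
    (hK : Units.rank K = 0) (htors : ¬ finrank K L ∣ Units.torsionOrder K)
    (hL : 0 < Units.rank L) (σ : Gal(L/K)) :
    ∃ η : (𝓞 L)ˣ, RingOfIntegers.norm K (η : 𝓞 L) = 1 ∧
      ∀ e : (𝓞 L)ˣ, (η : 𝓞 L) * σ • (e : 𝓞 L) ≠ e := by
  let φ : Gal(L/K) →* Monoid.End (𝓞 L)ˣ :=
    { toFun := fun g ↦ Units.map (MulSemiringAction.toRingHom Gal(L/K) (𝓞 L) g)
      map_one' := MonoidHom.ext fun u ↦ Units.ext (one_smul Gal(L/K) (u : 𝓞 L))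
      map_mul' := fun g h ↦ MonoidHom.ext fun u ↦ Units.ext (mul_smul g h (u : 𝓞 L)) }
  have hφ : φ σ ^ finrank K L = 1 := by
    rw [← map_pow, ← IsGalois.card_aut_eq_finrank, pow_card_eq_one', map_one]
  obtain ⟨η, hnorm, hη⟩ := exists_map_eq_one_and_mul_ne hdeg hφ
    (Units.map (RingOfIntegers.norm K)) (fun u ↦ unit_pow_torsionOrder_eq_one hK _)
    (exists_unit_pow_ne_pow hL fun h ↦ htors (hdeg.dvd_of_dvd_pow h))
  exact ⟨η, congrArg Units.val hnorm, fun e he ↦ hη e (Units.ext he)⟩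

theorem finrank_dvd_classNumber_of_elementDifferentIdeal_eq_top [IsGalois K L]
    (hdeg : (finrank K L).Prime)
    (hunram : elementDifferentIdeal Gal(L/K) (𝓞 L) = ⊤) (hK : Units.rank K = 0)
    (htors : ¬ finrank K L ∣ Units.torsionOrder K) (hL : 0 < Units.rank L) :
    finrank K L ∣ classNumber K := by
  have hcard : Nat.card Gal(L/K) = finrank K L := IsGalois.card_aut_eq_finrank K L
  have := Fact.mk hdeg
  have : IsCyclic Gal(L/K) := isCyclic_of_prime_card hcard
  obtain ⟨σ, hσ⟩ := IsCyclic.exists_generator (α := Gal(L/K))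
  obtain ⟨η, hnorm, hη⟩ := exists_unit_norm_eq_one_and_mul_smul_ne hdeg hK htors hL σ
  obtain ⟨c, hc⟩ := exists_orderOf_classGroup_eq_card (A := 𝓞 K) hunram (hcard ▸ hdeg) hσ
    (by rw [← algebraMap_norm_eq_prod_smul, hnorm, map_one]) hη
  rw [← hcard, ← hc]
  exact orderOf_dvd_card

end

/-! ### Cubic extensions -/

theorem neg_sum_eq_and_sum_mul_eq_of_cubic_roots {B : Type*} [CommRing B] [IsDomain B]
    {x y z b c d : B} (hxy : x ≠ y) (hxz : x ≠ z) (hyz : y ≠ z)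
    (hx : x ^ 3 + b * x ^ 2 + c * x + d = 0) (hy : y ^ 3 + b * y ^ 2 + c * y + d = 0)
    (hz : z ^ 3 + b * z ^ 2 + c * z + d = 0) :
    b = -(x + y + z) ∧ c = x * y + x * z + y * z := by
  have hcofactor {u : B} (hu : x ≠ u) (h : u ^ 3 + b * u ^ 2 + c * u + d = 0) :
      x ^ 2 + x * u + u ^ 2 + b * (x + u) + c = 0 :=
    mul_left_cancel₀ (sub_ne_zero.2 hu) (by linear_combination hx - h)
  have hb : b = -(x + y + z) :=
    mul_left_cancel₀ (sub_ne_zero.2 hyz)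
      (by linear_combination hcofactor hxy hy - hcofactor hxz hz)
  exact ⟨hb, by linear_combination hcofactor hxy hy - (x + y) * hb⟩

theorem univ_erase_one_eq_of_card_eq_three {G : Type*} [Group G] [Fintype G] [DecidableEq G]
    (hG : Nat.card G = 3) {σ : G} (hσ : σ ≠ 1) :
    (univ.erase 1 : Finset G) = {σ, σ ^ 2} ∧ σ ≠ σ ^ 2 := by
  have h3 : σ ^ 3 = 1 := hG ▸ pow_card_eq_one'
  have h2 : σ ^ 2 ≠ 1 := fun h ↦ hσ (by rw [← h3, pow_succ, h, one_mul])
  have hne : σ ≠ σ ^ 2 := fun h ↦ hσ (by simpa [sq] using h)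
  refine ⟨(eq_of_subset_of_card_le ?_ ?_).symm, hne⟩
  · simp [insert_subset_iff, hσ, h2]
  · rw [card_erase_of_mem (mem_univ _), card_univ, card_pair hne, ← Nat.card_eq_fintype_card, hG]

theorem prod_sub_smul_mem_elementDifferentIdeal {G B : Type*} [Group G] [Fintype G] [CommRing B]
    [MulSemiringAction G B] (hG : Nat.card G = 3) {σ : G} (hσ : σ ≠ 1) (t : B) :
    (t - σ • t) * (t - σ ^ 2 • t) ∈ elementDifferentIdeal G B := by
  classical
  obtain ⟨herase, hne⟩ := univ_erase_one_eq_of_card_eq_three hG hσ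
  exact Ideal.subset_span ⟨t, by simp only [herase, prod_pair hne]⟩

theorem elementDifferentIdeal_eq_top_of_cubic {G A B : Type*} [Group G] [Fintype G] [CommRing A]
    [CommRing B] [IsDomain B] [Algebra A B] [MulSemiringAction G B]
    [SMulCommClass G A B] [Algebra.IsInvariant A B G] (hG : Nat.card G = 3) {P : Cubic A}
    (ha : P.a = 1) (hroot : ∀ x : A, aeval (algebraMap A B x) P.toPoly ≠ 0)
    (hunit : IsUnit (P.b ^ 2 - 3 * P.c)) {t : B} (ht : aeval t P.toPoly = 0) :
    elementDifferentIdeal G B = ⊤ := by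
  obtain ⟨σ, hσt⟩ : ∃ σ : G, σ • t ≠ t := by
    by_contra! hfix
    obtain ⟨x, rfl⟩ := Algebra.IsInvariant.isInvariant (A := A) t hfix
    exact hroot x ht
  have hσ : σ ≠ 1 := by rintro rfl; exact hσt (one_smul G t)
  have hσ3 : σ ^ 3 = 1 := hG ▸ pow_card_eq_one'
  have hsmul_root (g : G) : (g • t) ^ 3 + algebraMap A B P.b * (g • t) ^ 2 +
      algebraMap A B P.c * g • t + algebraMap A B P.d = 0 := by
    have h := congrArg (g • ·) ht
    simpa [Cubic.toPoly, ha, smul_pow', smul_mul', smul_algebraMap] using h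
  have hσσ : σ • σ • t = σ ^ 2 • t := by rw [smul_smul, sq]
  have hσσ₂ : σ • σ ^ 2 • t = t := by rw [smul_smul, ← pow_succ', hσ3, one_smul]
  have hσ₂σ : σ ^ 2 • σ • t = t := by rw [smul_smul, ← pow_succ, hσ3, one_smul]
  have hσ₂σ₂ : σ ^ 2 • σ ^ 2 • t = σ • t := by rw [sq, mul_smul, ← sq, hσσ₂]
  obtain ⟨hb, hc⟩ := neg_sum_eq_and_sum_mul_eq_of_cubic_roots hσt.symm
    (fun h ↦ hσt (by rw [← h] at hσσ₂; exact hσσ₂))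
    (fun h ↦ hσt (smul_left_cancel σ (hσσ.trans h.symm)))
    (by simpa using hsmul_root 1) (hsmul_root σ) (hsmul_root (σ ^ 2))
  refine Ideal.eq_top_of_isUnit_mem _ ?_ (hunit.map (algebraMap A B))
  -- The summands are the values of the derivative of `P` at the three roots.
  have hsum_deriv : algebraMap A B (P.b ^ 2 - 3 * P.c) =
    (t - σ • t) * (t - σ ^ 2 • t) + (σ • t - σ • σ • t) * (σ • t - σ ^ 2 • σ • t) +
      (σ ^ 2 • t - σ • σ ^ 2 • t) * (σ ^ 2 • t - σ ^ 2 • σ ^ 2 • t) := by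
    rw [hσσ, hσσ₂, hσ₂σ, hσ₂σ₂, map_sub, map_mul, map_pow, map_ofNat, hb, hc]
    ring
  rw [hsum_deriv]
  exact add_mem (add_mem (prod_sub_smul_mem_elementDifferentIdeal hG hσ _)
    (prod_sub_smul_mem_elementDifferentIdeal hG hσ _))
    (prod_sub_smul_mem_elementDifferentIdeal hG hσ _)

theorem splits_toPoly_of_isSquare_discr_s2 {F : Type*} [Field F] [NeZero (2 : F)] {P : Cubic F}
    (ha : P.a ≠ 0) (hdiscr : IsSquare P.discr) {y : F} (hy : P.toPoly.IsRoot y) :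
    P.toPoly.Splits := by
  have hPy : P.a * y ^ 3 + P.b * y ^ 2 + P.c * y + P.d = 0 := by simpa [Cubic.toPoly] using hy
  let b := P.b + P.a * y
  let c := P.c + P.b * y + P.a * y ^ 2
  have hfactor : P.toPoly = (X - C y) * (C P.a * X ^ 2 + C b * X + C c) := by
    have hd : P.d = -(P.a * y ^ 3 + P.b * y ^ 2 + P.c * y) := by linear_combination hPy
    simp only [Cubic.toPoly, hd, b, c, C_neg, C_add, C_mul, C_pow]
    ring
  have hcofactor : ∃ z, P.a * (z * z) + b * z + c = 0 := by
    by_cases hy' : 3 * P.a * y ^ 2 + 2 * P.b * y + P.c = 0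
    · exact ⟨y, by linear_combination hy'⟩
    · obtain ⟨s, hs⟩ := hdiscr
      refine exists_quadratic_eq_zero ha ⟨s / (3 * P.a * y ^ 2 + 2 * P.b * y + P.c), ?_⟩
      rw [div_mul_div_comm, ← hs, eq_div_iff (mul_ne_zero hy' hy'), discrim, Cubic.discr]
      linear_combination (4 * P.b ^ 3 - 18 * P.a * P.b * P.c + 27 * P.a ^ 2 * P.d -
        27 * P.a ^ 2 * (P.a * y ^ 3 + P.b * y ^ 2 + P.c * y)) * hPy
  obtain ⟨z, hz⟩ := hcofactor
  rw [hfactor]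
  refine (Splits.X_sub_C y).mul (Splits.of_natDegree_eq_two (x := z) (natDegree_quadratic ha) ?_)
  simp only [eval_add, eval_mul, eval_C, eval_pow, eval_X]
  linear_combination hz

theorem discr_map {R S : Type*} [CommRing R] [CommRing S] (φ : R →+* S) (P : Cubic R) :
    (P.map φ).discr = φ P.discr := by
  simp only [Cubic.discr, Cubic.map, map_add, map_sub, map_mul, map_pow, map_ofNat φ]

theorem isGalois_of_isSquare_discr_s2 {F E : Type*} [Field F] [NeZero (2 : F)] [Field E] [Algebra F E]
    {P : Cubic F} (ha : P.a ≠ 0) (hsep : P.toPoly.Separable) (hdiscr : IsSquare P.discr) {t : E}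
    (ht : aeval t P.toPoly = 0) (hgen : Algebra.adjoin F {t} = ⊤) : IsGalois F E := by
  have : NeZero (2 : E) := by
    rw [← map_ofNat (algebraMap F E) 2]
    exact .of_injective (algebraMap F E).injective
  have hsplits : (P.toPoly.map (algebraMap F E)).Splits := by
    rw [← Cubic.map_toPoly]
    refine splits_toPoly_of_isSquare_discr_s2 (by simpa [Cubic.map] using ha)
      (discr_map (algebraMap F E) P ▸ hdiscr.map (algebraMap F E)) (y := t) ?_
    rw [Cubic.map_toPoly, IsRoot, eval_map_algebraMap, ht]
  have : P.toPoly.IsSplittingField F E := by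
    refine ⟨hsplits, top_unique (hgen.ge.trans (Algebra.adjoin_mono ?_))⟩
    rw [Set.singleton_subset_iff, mem_rootSet]
    exact ⟨Cubic.ne_zero_of_a_ne_zero ha, ht⟩
  exact .of_separable_splitting_field hsep

theorem irreducible_map_of_not_natDegree_dvd_finrank {F E : Type*} [Field F] [Field E]
    [Algebra F E] [FiniteDimensional F E] {f : F[X]} (hmonic : f.Monic) (hirr : Irreducible f)
    (htwo : 2 ≤ f.natDegree) (hthree : f.natDegree ≤ 3) (hdvd : ¬ f.natDegree ∣ finrank F E) :
    Irreducible (f.map (algebraMap F E)) := by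
  rw [(hmonic.map _).irreducible_iff_roots_eq_zero_of_degree_le_three (by rwa [natDegree_map])
    (by rwa [natDegree_map]), Multiset.eq_zero_iff_forall_notMem]
  intro x hx
  have hfx : aeval x f = 0 := by rw [← eval_map_algebraMap]; exact isRoot_of_mem_roots hx
  rw [minpoly.eq_of_irreducible_of_monic hirr hfx hmonic] at hdvd
  exact hdvd (minpoly.degree_dvd (Algebra.IsIntegral.isIntegral x))

theorem irreducible_map_toPoly_of_forall_not_isRoot {R E : Type*} (F : Type*) [CommRing R]
    [IsDomain R] [IsIntegrallyClosed R] [Field F] [Algebra R F] [IsFractionRing R F] [Field E]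
    [Algebra F E] [FiniteDimensional F E] [Algebra R E] [IsScalarTower R F E] {P : Cubic R}
    (ha : P.a = 1) (hroot : ∀ x, ¬ P.toPoly.IsRoot x) (hdvd : ¬ 3 ∣ finrank F E) :
    Irreducible (P.map (algebraMap R E)).toPoly := by
  have hmonic : P.toPoly.Monic := Cubic.monic_of_a_eq_one ha
  have hdeg : P.toPoly.natDegree = 3 := Cubic.natDegree_of_a_ne_zero (ha ▸ one_ne_zero)
  have hdegF : (P.toPoly.map (algebraMap R F)).natDegree = 3 := by rw [hmonic.natDegree_map, hdeg]
  have hirr : Irreducible P.toPoly := by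
    rw [hmonic.irreducible_iff_roots_eq_zero_of_degree_le_three (by omega) hdeg.le,
      Multiset.eq_zero_iff_forall_notMem]
    exact fun x hx ↦ hroot x (isRoot_of_mem_roots hx)
  rw [Cubic.map_toPoly, IsScalarTower.algebraMap_eq R F E, ← Polynomial.map_map]
  exact irreducible_map_of_not_natDegree_dvd_finrank (hmonic.map _)
    (hmonic.irreducible_iff_irreducible_map_fraction_map.1 hirr) (by omega) hdegF.le
    (by rwa [hdegF])

theorem three_dvd_classNumber_of_aeval_cubic_eq_zero {K L : Type*} [Field K] [NumberField K]
    [Field L] [NumberField L] [Algebra K L] [IsGalois K L] (hdeg : finrank K L = 3)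
    (hK : Units.rank K = 0) (htors : ¬ 3 ∣ Units.torsionOrder K) {P : Cubic (𝓞 K)} (ha : P.a = 1)
    (hroot : ∀ x, ¬ P.toPoly.IsRoot x) (hunit : IsUnit (P.b ^ 2 - 3 * P.c)) {t : L}
    (ht : aeval t P.toPoly = 0) : 3 ∣ classNumber K := by
  have hcard : Nat.card Gal(L/K) = 3 := (IsGalois.card_aut_eq_finrank K L).trans hdeg
  have hrank : 0 < Units.rank L := units_rank_pos_of_two_lt_finrank <| by
    have hpos : 0 < finrank ℚ K := finrank_pos
    rw [← finrank_mul_finrank ℚ K L, hdeg]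
    omega
  have hint : IsIntegral (𝓞 K) t := ⟨P.toPoly, Cubic.monic_of_a_eq_one ha, ht⟩
  obtain ⟨t, rfl⟩ := (IsIntegralClosure.isIntegral_iff (A := 𝓞 L)).1 hint
  rw [aeval_algebraMap_apply, FaithfulSMul.algebraMap_eq_zero_iff] at ht
  have hrootL (x : 𝓞 K) : aeval (algebraMap (𝓞 K) (𝓞 L) x) P.toPoly ≠ 0 := by
    rw [aeval_algebraMap_apply, Ne, FaithfulSMul.algebraMap_eq_zero_iff]
    exact hroot x
  rw [← hdeg] at htors ⊢
  exact finrank_dvd_classNumber_of_elementDifferentIdeal_eq_top (hdeg ▸ Nat.prime_three)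
    (elementDifferentIdeal_eq_top_of_cubic hcard ha hrootL hunit ht) hK htors hrank

theorem three_dvd_classNumber_of_isSquare_discr {K : Type*} [Field K] [NumberField K]
    (hK : Units.rank K = 0) (htors : ¬ 3 ∣ Units.torsionOrder K) {P : Cubic (𝓞 K)} (ha : P.a = 1)
    (hirr : Irreducible (P.map (algebraMap (𝓞 K) K)).toPoly)
    (hdiscr : IsSquare (P.map (algebraMap (𝓞 K) K)).discr)
    (hunit : IsUnit (P.b ^ 2 - 3 * P.c)) : 3 ∣ classNumber K := by
  set Q : Cubic K := P.map (algebraMap (𝓞 K) K)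
  have hQ : Q.toPoly = P.toPoly.map (algebraMap (𝓞 K) K) := Cubic.map_toPoly
  have hQa : Q.a = 1 := by simp only [Q, Cubic.map, ha, map_one]
  have hQ0 : Q.a ≠ 0 := hQa ▸ one_ne_zero
  have hmonic : Q.toPoly.Monic := Cubic.monic_of_a_eq_one hQa
  have hnatDegree : Q.toPoly.natDegree = 3 := Cubic.natDegree_of_a_ne_zero hQ0
  have := Fact.mk hirr
  have : Module.Finite K (AdjoinRoot Q.toPoly) := hmonic.finite_adjoinRoot
  have : NumberField (AdjoinRoot Q.toPoly) := .of_module_finite K _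
  have haeval : aeval (AdjoinRoot.root Q.toPoly) Q.toPoly = 0 :=
    (AdjoinRoot.aeval_eq _).trans AdjoinRoot.mk_self
  have : IsGalois K (AdjoinRoot Q.toPoly) :=
    isGalois_of_isSquare_discr_s2 hQ0 hirr.separable hdiscr haeval AdjoinRoot.adjoinRoot_eq_top
  have hfinrank : finrank K (AdjoinRoot Q.toPoly) = 3 :=
    (AdjoinRoot.powerBasis' hmonic).finrank.trans hnatDegree
  refine three_dvd_classNumber_of_aeval_cubic_eq_zero hfinrank hK htors ha (fun x hx ↦ ?_) hunit
    (t := AdjoinRoot.root Q.toPoly) (by rw [← aeval_map_algebraMap K, ← hQ]; exact haeval)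
  exact hirr.not_isRoot_of_natDegree_ne_one (by rw [hnatDegree]; decide) (hQ ▸ hx.map)

/-! ### Quadratic fields -/

theorem isTotallyComplex_of_isSquare_intCast {K : Type*} [Field K] {D : ℤ} (hD : D < 0)
    (hsq : IsSquare (D : K)) : IsTotallyComplex K := by
  refine ⟨fun v ↦ InfinitePlace.not_isReal_iff_isComplex.1 fun hv ↦ ?_⟩
  have hreal := hsq.map (InfinitePlace.embedding_of_isReal hv)
  rw [map_intCast] at hreal
  exact (Int.cast_lt_zero.2 hD).not_ge hreal.nonneg

theorem units_rank_eq_zero_of_finrank_eq_two {K : Type*} [Field K] [NumberField K]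
    [IsTotallyComplex K] (hdeg : finrank ℚ K = 2) : Units.rank K = 0 := by
  have hfinrank := IsTotallyComplex.finrank K
  have hreal := IsTotallyComplex.nrRealPlaces_eq_zero K
  have hcard := InfinitePlace.card_eq_nrRealPlaces_add_nrComplexPlaces K
  unfold Units.rank
  omega

theorem isSquare_mul_of_finrank_eq_two {F E : Type*} [Field F] [NeZero (2 : F)] [Field E]
    [Algebra F E] (hdeg : finrank F E = 2) {x y : F} (hx : ¬ IsSquare x) (hy : ¬ IsSquare y)
    (hxE : IsSquare (algebraMap F E x)) (hyE : IsSquare (algebraMap F E y)) :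
    IsSquare (x * y) := by
  have : FiniteDimensional F E := .of_finrank_eq_succ hdeg
  obtain ⟨α, hα⟩ := hxE
  obtain ⟨β, hβ⟩ := hyE
  have hli : LinearIndependent F ![1, α] :=
    (LinearIndependent.pair_iff' one_ne_zero).2 fun r hr ↦ hx ⟨r, (algebraMap F E).injective <| by
      rw [hα, ← hr, ← Algebra.algebraMap_eq_smul_one, map_mul]⟩
  have hmem : β ∈ Submodule.span F (Set.range ![1, α]) := by
    rw [hli.span_eq_top_of_card_eq_finrank' (by rw [Fintype.card_fin, hdeg])]
    exact Submodule.mem_top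
  rw [Matrix.range_cons_cons_empty, Submodule.mem_span_pair] at hmem
  obtain ⟨a, b, rfl⟩ := hmem
  have hrel : (a ^ 2 + b ^ 2 * x - y) • (1 : E) + (2 * (a * b)) • α = 0 := by
    simp only [Algebra.smul_def, map_add, map_sub, map_mul, map_pow, map_ofNat] at hβ ⊢
    linear_combination algebraMap F E b ^ 2 * hα - hβ
  obtain ⟨hone, hcross⟩ := LinearIndependent.pair_iff.1 hli _ _ hrel
  rw [mul_eq_zero_iff_left two_ne_zero, mul_eq_zero] at hcross
  rcases hcross with rfl | rfl
  · exact ⟨b * x, by linear_combination -x * hone⟩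
  · exact absurd ⟨a, by linear_combination -hone⟩ hy

theorem isSquare_neg_three_of_dvd_torsionOrder {K : Type*} [Field K] [NumberField K]
    (h : 3 ∣ Units.torsionOrder K) : IsSquare (-3 : K) := by
  have := Fact.mk Nat.prime_three
  obtain ⟨ζ, hζ⟩ := exists_prime_orderOf_dvd_card' (G := Units.torsion K) 3 h
  have hprim : IsPrimitiveRoot ((ζ : (𝓞 K)ˣ) : 𝓞 K) 3 :=
    IsPrimitiveRoot.coe_units_iff.2 (IsPrimitiveRoot.coe_submonoidClass_iff.2
      (hζ ▸ IsPrimitiveRoot.orderOf ζ))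
  have hroot := (hprim.map_of_injective RingOfIntegers.coe_injective).isRoot_cyclotomic three_pos
  set z := algebraMap (𝓞 K) K (ζ : (𝓞 K)ˣ)
  have hz : z ^ 2 + z + 1 = 0 := by simpa [cyclotomic_three] using hroot
  exact ⟨2 * z + 1, by linear_combination -4 * hz⟩

theorem not_three_dvd_torsionOrder_of_finrank_eq_two {K : Type*} [Field K] [NumberField K]
    (hdeg : finrank ℚ K = 2) {D : ℤ} (hD : ¬ IsSquare D) (hD' : ¬ IsSquare (D * -3))
    (hsq : IsSquare (D : K)) : ¬ 3 ∣ Units.torsionOrder K := by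
  intro h
  refine hD' (Rat.isSquare_intCast_iff.1 ?_)
  push_cast
  exact isSquare_mul_of_finrank_eq_two hdeg (mt Rat.isSquare_intCast_iff.1 hD) (by norm_num)
    (by simpa using hsq) (by simpa using isSquare_neg_three_of_dvd_torsionOrder h)

theorem eq_zero_of_sq_eq_sq_add_four {u k : ℤ} (h : u ^ 2 = k ^ 2 + 4) : k = 0 := by
  have hlt : |k| < |u| := sq_lt_sq.1 (by omega)
  have hk : |k| < 2 := by nlinarith [sq_abs k, sq_abs u, abs_nonneg k]
  have hfive : ¬ IsSquare (5 : ℤ) := by norm_num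
  obtain ⟨hk₁, hk₂⟩ := abs_lt.1 hk
  interval_cases k
  · exact absurd ⟨u, by linarith⟩ hfive
  · rfl
  · exact absurd ⟨u, by linarith⟩ hfive

theorem not_isSquare_four_mul_sub_mul_neg_three {c : ℤ} (hc : c ≠ 0) :
    ¬ IsSquare ((4 * c - 27 * c ^ 2) * -3) := by
  rintro ⟨k, hk⟩
  have hk0 := eq_zero_of_sq_eq_sq_add_four (u := 27 * c - 2) (k := 3 * k)
    (by linear_combination 9 * hk)
  have : c * (27 * c - 4) = 0 := by nlinarith
  rcases mul_eq_zero.1 this with h | h <;> omega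

theorem three_dvd_classNumber_of_finrank_eq_two {K : Type*} [Field K] [NumberField K]
    (hdeg : finrank ℚ K = 2) {c : ℤ} (hroot : ∀ z : ℤ, z ^ 3 + z ^ 2 ≠ c)
    (hsq : IsSquare ((4 * c - 27 * c ^ 2 : ℤ) : K)) : 3 ∣ classNumber K := by
  have hc : c ≠ 0 := by simpa [eq_comm] using hroot 0
  have hneg : 4 * c - 27 * c ^ 2 < 0 := by nlinarith [Int.one_le_abs hc, sq_abs c, le_abs_self c]
  have := isTotallyComplex_of_isSquare_intCast hneg hsq
  let P : Cubic ℤ := ⟨1, 1, 0, -c⟩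
  have hP (z : ℤ) : ¬ P.toPoly.IsRoot z := fun h ↦ hroot z <| by
    simp only [P, Cubic.toPoly, IsRoot, eval_add, eval_mul, eval_C, eval_pow, eval_X] at h
    linear_combination h
  have hdiscr : P.discr = 4 * c - 27 * c ^ 2 := by simp only [P, Cubic.discr]; ring
  have hmap : (P.map (algebraMap ℤ (𝓞 K))).map (algebraMap (𝓞 K) K) = P.map (algebraMap ℤ K) := by
    simp [P, Cubic.map]
  refine three_dvd_classNumber_of_isSquare_discr (units_rank_eq_zero_of_finrank_eq_two hdeg)
    (not_three_dvd_torsionOrder_of_finrank_eq_two hdeg (fun h ↦ hneg.not_ge h.nonneg)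
      (not_isSquare_four_mul_sub_mul_neg_three hc) hsq)
    (P := P.map (algebraMap ℤ (𝓞 K))) (map_one _) ?_ ?_ (by simp [P, Cubic.map])
  · rw [hmap]
    exact irreducible_map_toPoly_of_forall_not_isRoot ℚ rfl hP (by rw [hdeg]; decide)
  · rw [hmap, discr_map, hdiscr]
    exact hsq

theorem class_number_div_three_of_sqrt_neg_sq_sq_sub_four_mul_div_three_general
    (m n : ℤ) (hdvd : 27 ∣ m ^ 2 * n) (hroot : ∀ z : ℤ, 27 * (z ^ 3 + z ^ 2) ≠ m ^ 2 * n)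
    (K : Type*) [Field K] [NumberField K] (hdeg : Module.finrank ℚ K = 2)
    (hsqrt : ∃ α : K, α ^ 2 = -((m : K) ^ 2 * (n : K) ^ 2 - 4 * (n : K)) / 3) :
    3 ∣ NumberField.classNumber K := by
  obtain ⟨c, hc⟩ := hdvd
  obtain ⟨α, hα⟩ := hsqrt
  refine three_dvd_classNumber_of_finrank_eq_two (c := c) hdeg
    (fun z hz ↦ hroot z (by rw [hz, hc])) ⟨m * α / 3, ?_⟩
  have hcK : (m : K) ^ 2 * n = 27 * c := by exact_mod_cast hc
  calc ((4 * c - 27 * c ^ 2 : ℤ) : K) = (4 * (27 * c) - (27 * c) ^ 2) / 27 := by push_cast; ring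
    _ = m ^ 2 * α ^ 2 / 9 := by rw [← hcK, hα]; ring
    _ = m * α / 3 * (m * α / 3) := by ring

theorem mul_cube_add_sq_ne_of_odd {c : ℤ} (hc : Odd c) (a z : ℤ) : a * (z ^ 3 + z ^ 2) ≠ c := by
  rintro rfl
  refine Int.not_even_iff_odd.2 hc (Even.mul_left ?_ a)
  rw [show z ^ 3 + z ^ 2 = z * (z * (z + 1)) by ring]
  exact (Int.even_mul_succ_self z).mul_left z

/-- Let `m` and `n` be odd positive integers with `m ≡ 0 (mod 3)` and with `3` dividing `n`
exactly once.  Then `3` divides the class number of `ℚ(√(-(m² n² - 4 n) / 3))`. -/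
theorem class_number_div_three_of_sqrt_neg_sq_sq_sub_four_mul_div_three
    (m n : ℤ) (hm : 0 < m) (hn : 0 < n) (hmodd : Odd m) (hnodd : Odd n)
    (hm3 : 3 ∣ m) (hn3 : 3 ∣ n) (hn9 : ¬ (9 ∣ n))
    (K : Type*) [Field K] [NumberField K] (hdeg : Module.finrank ℚ K = 2)
    (hsqrt : ∃ α : K, α ^ 2 = -((m : K) ^ 2 * (n : K) ^ 2 - 4 * (n : K)) / 3) :
    3 ∣ NumberField.classNumber K :=
  class_number_div_three_of_sqrt_neg_sq_sq_sub_four_mul_div_three_general m n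
    (mul_dvd_mul (pow_dvd_pow_of_dvd hm3 2) hn3)
    (mul_cube_add_sq_ne_of_odd (hmodd.pow.mul hnodd) 27) K hdeg hsqrt
end

section
/- Let m > 1 and p be odd integers and let n be a positive integer. Let d₃ be the squarefree part of −(3^m p^{2n} + 4). Then 3 divides the class number of the imaginary quadratic field ℚ(√d₃). -/
/-!
Write `m = 2 * j + 3` and `c = 3 ^ j * p ^ n`, so that `K = ℚ(√d₃)` contains a square root of
`-(27 * c ^ 2 + 4)`, the discriminant of `X ^ 3 + X + c`. As `c` is odd, this cubic is irreducible
modulo `2`, and adjoining a root `θ` gives a cyclic cubic extension `L / K`. It is unramified: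
if `g ≠ 1` acts trivially modulo a prime, then that prime contains the linear coefficient
`1 = θ * g² θ - (g θ)²`.

Every unit of `K` is a cube, whereas `L` has a unit that is not a cube. If every unit of norm `1` of
`L` were of the form `ε / g ε` with `ε` a unit, the units of `L` would be `3`-divisible; so some
unit `η` of norm `1` is not of this form. By Hilbert 90, `η = β / g β` for some integer `β` of `L`.
The ideal `(β)` is Galois-invariant, hence extended from an ideal `I` of `K` because `L / K` is
unramified. The cube of `I` is principal, being the norm of `(β)`, but `I` is not: a generator would
differ from `β` by a unit `ε` with `η = ε / g ε`.
-/

section InvariantIdeals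

open Pointwise

variable {A B G : Type*} [CommRing A] [CommRing B] [Algebra A B] [Group G] [MulSemiringAction G B]

variable (B G) in
/-- The `B`-subalgebra of the functions `G → B` generated by the orbit maps `h ↦ h • y`, that is,
the image of `B ⊗[A] B → ∏ h : G, B`, `b ⊗ y ↦ (b * h • y)_h`. It serves to test whether this map
is surjective, which is how `B / A` being unramified enters. -/
def orbitSubalgebra : Subalgebra B (G → B) :=
  Algebra.adjoin B (Set.range fun (y : B) (h : G) ↦ h • y)

lemma smul_mem_orbitSubalgebra (y : B) : (fun h : G ↦ h • y) ∈ orbitSubalgebra B G :=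
  Algebra.subset_adjoin ⟨y, rfl⟩

lemma span_smul_sub_eq_top (hI : ∀ P : Ideal B, P.IsMaximal → P.inertia G = ⊥) {g : G}
    (hg : g ≠ 1) : Ideal.span (Set.range fun y : B ↦ g • y - y) = ⊤ := by
  by_contra hne
  obtain ⟨P, hP, hle⟩ := Ideal.exists_le_maximal _ hne
  have hgP : g ∈ P.inertia G := fun y ↦ hle (Ideal.subset_span ⟨y, rfl⟩)
  exact hg (by rwa [hI P hP, Subgroup.mem_bot] at hgP)

lemma exists_mem_orbitSubalgebra_separating (hI : ∀ P : Ideal B, P.IsMaximal → P.inertia G = ⊥)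
    {g : G} (hg : g ≠ 1) : ∃ φ ∈ orbitSubalgebra B G, φ 1 = 1 ∧ φ g = 0 := by
  have separate_mem_span : ∀ b ∈ Ideal.span (Set.range fun y : B ↦ g • y - y),
      ∃ φ ∈ orbitSubalgebra B G, φ 1 = b ∧ φ g = 0 := by
    intro b hb
    induction hb using Submodule.span_induction with
    | mem _ hy =>
      obtain ⟨y, rfl⟩ := hy
      exact ⟨algebraMap B (G → B) (g • y) - fun h ↦ h • y,
        sub_mem (algebraMap_mem _ _) (smul_mem_orbitSubalgebra y), by simp, by simp⟩
    | zero => exact ⟨0, zero_mem _, rfl, rfl⟩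
    | add b c _ _ hb hc =>
      obtain ⟨φ, hφ, hφ1, hφg⟩ := hb
      obtain ⟨ψ, hψ, hψ1, hψg⟩ := hc
      exact ⟨φ + ψ, add_mem hφ hψ, by simp [hφ1, hψ1], by simp [hφg, hψg]⟩
    | smul a b _ hb =>
      obtain ⟨φ, hφ, hφ1, hφg⟩ := hb
      exact ⟨a • φ, Subalgebra.smul_mem _ hφ a, by simp [hφ1], by simp [hφg]⟩
  exact separate_mem_span 1 (span_smul_sub_eq_top hI hg ▸ Submodule.mem_top)

open Classical in
lemma single_one_mem_orbitSubalgebra [Finite G]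
    (hI : ∀ P : Ideal B, P.IsMaximal → P.inertia G = ⊥) :
    (Pi.single 1 1 : G → B) ∈ orbitSubalgebra B G := by
  have := Fintype.ofFinite G
  choose φ hφ hφ1 hφg using fun g : {g : G // g ≠ 1} ↦
    exists_mem_orbitSubalgebra_separating hI g.2
  have hprod : (Pi.single 1 1 : G → B) = ∏ g, φ g := by
    ext h
    rw [Finset.prod_apply]
    by_cases hh : h = 1
    · subst hh
      simp [hφ1]
    · rw [Pi.single_eq_of_ne hh, Finset.prod_eq_zero (Finset.mem_univ ⟨h, hh⟩) (hφg ⟨h, hh⟩)]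
  exact hprod ▸ prod_mem fun g _ ↦ hφ g

section Trace

variable [Fintype G] [Algebra.IsInvariant A B G] {J : Ideal B}

lemma sum_smul_mem_map_comap (hJ : ∀ g : G, g • J = J) {x : B} (hx : x ∈ J) :
    ∑ h : G, h • x ∈ (J.comap (algebraMap A B)).map (algebraMap A B) := by
  obtain ⟨a, ha⟩ := Algebra.IsInvariant.isInvariant (A := A) (G := G) (∑ h : G, h • x) fun g ↦ by
    simp_rw [Finset.smul_sum, ← mul_smul]
    exact (Group.mulLeft_bijective g).sum_comp fun h ↦ h • x
  rw [← ha]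
  refine Ideal.mem_map_of_mem _ ?_
  rw [Ideal.mem_comap, ha]
  exact sum_mem fun h _ ↦ hJ h ▸ Ideal.smul_mem_pointwise_smul h x J hx

lemma sum_mul_smul_mem_map_comap (hJ : ∀ g : G, g • J = J) {φ : G → B}
    (hφ : φ ∈ orbitSubalgebra B G) {x : B} (hx : x ∈ J) :
    ∑ h : G, φ h * h • x ∈ (J.comap (algebraMap A B)).map (algebraMap A B) := by
  -- Passing from `ψ` to `φ * ψ` makes the claim stable under products of `φ`s.
  suffices hmul : ∀ ψ : G → B,
      (∀ x ∈ J, ∑ h : G, ψ h * h • x ∈ (J.comap (algebraMap A B)).map (algebraMap A B)) →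
      ∀ x ∈ J, ∑ h : G, (φ * ψ) h * h • x ∈ (J.comap (algebraMap A B)).map (algebraMap A B) by
    simpa using hmul 1 (fun x hx ↦ by simpa using sum_smul_mem_map_comap hJ hx) x hx
  clear hx
  induction hφ using Algebra.adjoin_induction with
  | mem _ hy =>
    obtain ⟨y, rfl⟩ := hy
    intro ψ hψ x hx
    simpa only [Pi.mul_apply, smul_mul', mul_left_comm, mul_assoc] using
      hψ (y * x) (J.mul_mem_left y hx)
  | algebraMap b =>
    intro ψ hψ x hx
    simpa only [Pi.mul_apply, Pi.algebraMap_apply, Algebra.algebraMap_self, RingHom.id_apply,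
      mul_assoc, ← Finset.mul_sum] using Ideal.mul_mem_left _ b (hψ x hx)
  | add φ₁ φ₂ _ _ h₁ h₂ =>
    intro ψ hψ x hx
    simpa only [Pi.mul_apply, Pi.add_apply, add_mul, Finset.sum_add_distrib] using
      add_mem (h₁ ψ hψ x hx) (h₂ ψ hψ x hx)
  | mul φ₁ φ₂ _ _ h₁ h₂ =>
    intro ψ hψ
    simpa only [mul_assoc] using h₁ _ (h₂ ψ hψ)

end Trace

theorem map_comap_eq_of_inertia_eq_bot [Finite G] [Algebra.IsInvariant A B G]
    (hI : ∀ P : Ideal B, P.IsMaximal → P.inertia G = ⊥) {J : Ideal B}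
    (hJ : ∀ g : G, g • J = J) :
    (J.comap (algebraMap A B)).map (algebraMap A B) = J := by
  classical
  have := Fintype.ofFinite G
  refine le_antisymm Ideal.map_comap_le fun x hx ↦ ?_
  simpa [Pi.single_apply] using
    sum_mul_smul_mem_map_comap (A := A) hJ (single_one_mem_orbitSubalgebra hI) hx

end InvariantIdeals

section HilbertNinety

variable {B G : Type*} [CommRing B] [IsDomain B] [Group G] [MulSemiringAction G B]

lemma exists_sum_range_orderOf_mul_smul_ne_zero [FaithfulSMul G B] {g : G} (hg : IsOfFinOrder g)
    {c : ℕ → B} (hc : c 0 ≠ 0) :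
    ∃ x : B, ∑ i ∈ Finset.range (orderOf g), c i * g ^ i • x ≠ 0 := by
  by_contra! hzero
  let χ (i : Fin (orderOf g)) : B →* B := MulSemiringAction.toRingHom G B (g ^ (i : ℕ))
  have hχ : Function.Injective χ := fun i j hij ↦ Fin.ext <|
    pow_injOn_Iio_orderOf i.2 j.2 <|
      FaithfulSMul.eq_of_smul_eq_smul fun x ↦ DFunLike.congr_fun hij x
  have hlin := (linearIndependent_monoidHom B B).comp χ hχ
  refine hc (Fintype.linearIndependent_iff.1 hlin (fun i ↦ c i) ?_ ⟨0, hg.orderOf_pos⟩)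
  ext x
  simpa [χ, Finset.sum_range] using hzero x

theorem exists_ne_zero_mul_smul_eq_of_prod_smul_eq_one [FaithfulSMul G B] {g : G}
    (hg : IsOfFinOrder g) {η : B} (hη : ∏ i ∈ Finset.range (orderOf g), g ^ i • η = 1) :
    ∃ β : B, β ≠ 0 ∧ η * g • β = β := by
  let c (i : ℕ) : B := ∏ j ∈ Finset.range i, g ^ j • η
  have hc_succ (i : ℕ) : c (i + 1) = η * g • c i := by
    simp only [c, Finset.prod_range_succ', Finset.smul_prod', ← mul_smul, ← pow_succ', pow_zero,
      one_smul, mul_comm]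
  obtain ⟨x, hx⟩ := exists_sum_range_orderOf_mul_smul_ne_zero (B := B) hg (c := c) (by simp [c])
  refine ⟨_, hx, ?_⟩
  have hshift : η * g • ∑ i ∈ Finset.range (orderOf g), c i * g ^ i • x =
      ∑ i ∈ Finset.range (orderOf g), c (i + 1) * g ^ (i + 1) • x := by
    simp only [Finset.smul_sum, Finset.mul_sum, hc_succ, smul_mul', mul_assoc, ← mul_smul,
      ← pow_succ']
  have hends : c (orderOf g) * g ^ orderOf g • x = c 0 * g ^ 0 • x := by
    simp [c, hη, pow_orderOf_eq_one]
  rw [hshift]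
  have := Finset.sum_range_succ' (fun i ↦ c i * g ^ i • x) (orderOf g)
  rw [Finset.sum_range_succ, hends] at this
  exact (add_right_cancel this).symm

end HilbertNinety

section Divisible

open Polynomial

lemma exists_sub_one_pow_prime_sub_one_eq {R : Type*} [Ring R] (p : ℕ) [Fact p.Prime] (a : R) :
    ∃ b : R, (a - 1) ^ (p - 1) = ∑ i ∈ Finset.range p, a ^ i + p * b := by
  have hmod : ((X - 1) ^ (p - 1) - cyclotomic p ℤ).map (Int.castRingHom (ZMod p)) = 0 := by
    have hfrob := cyclotomic_mul_prime_eq_pow_of_not_dvd (ZMod p) (p := p) (n := 1)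
      (Fact.out : p.Prime).not_dvd_one
    rw [one_mul, cyclotomic_one] at hfrob
    simp [hfrob]
  obtain ⟨q, hq⟩ : C (p : ℤ) ∣ (X - 1) ^ (p - 1) - cyclotomic p ℤ := by
    rw [C_dvd_iff_dvd_coeff]
    intro i
    rw [← ZMod.intCast_zmod_eq_zero_iff_dvd]
    simpa only [coeff_map, coeff_zero, eq_intCast] using congrArg (coeff · i) hmod
  refine ⟨aeval a q, ?_⟩
  simpa [cyclotomic_prime, sub_eq_iff_eq_add'] using congrArg (aeval a) hq

variable {R M : Type*} [Ring R] [AddCommGroup M] [Module R M] {φ : Module.End R M} {p : ℕ}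

lemma exists_sum_pow_apply_sub_nsmul_eq_zero (hφ : φ ^ p = 1)
    (hfix : ∀ x, φ x = x → ∃ y, φ y = y ∧ p • y = x) (x : M) :
    ∃ y, φ y = y ∧ (∑ i ∈ Finset.range p, φ ^ i) (x - p • y) = 0 := by
  have hsum_fixed : φ ((∑ i ∈ Finset.range p, φ ^ i) x) = (∑ i ∈ Finset.range p, φ ^ i) x := by
    have hgeom := mul_geom_sum φ p
    rw [hφ, sub_self] at hgeom
    exact sub_eq_zero.1 (DFunLike.congr_fun hgeom x)
  obtain ⟨z, hz, hpz⟩ := hfix _ hsum_fixed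
  obtain ⟨y, hy, rfl⟩ := hfix z hz
  have hpow (i : ℕ) : (φ ^ i) y = y := by
    rw [Module.End.pow_apply, Function.iterate_fixed hy]
  refine ⟨y, hy, ?_⟩
  rw [map_sub, ← hpz, map_nsmul, sub_eq_zero]
  simp only [LinearMap.sum_apply, hpow, Finset.sum_const, Finset.card_range]

-- Modulo `p`, the norm `∑ φ ^ i` is `(φ - 1) ^ (p - 1)`; as `φ - 1` maps the kernel of the norm
-- onto itself, this kernel consists of multiples of `p`.
theorem exists_prime_nsmul_eq [Fact p.Prime] (hφ : φ ^ p = 1)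
    (hfix : ∀ x, φ x = x → ∃ y, φ y = y ∧ p • y = x)
    (hker : ∀ x, (∑ i ∈ Finset.range p, φ ^ i) x = 0 → ∃ y, (φ - 1) y = x) (x : M) :
    ∃ y, p • y = x := by
  have hker_iter (n : ℕ) (x : M) (hx : (∑ i ∈ Finset.range p, φ ^ i) x = 0) :
      ∃ y, (∑ i ∈ Finset.range p, φ ^ i) y = 0 ∧ ((φ - 1) ^ n) y = x := by
    induction n generalizing x with
    | zero => exact ⟨x, hx, rfl⟩
    | succ n ih =>
      obtain ⟨y, rfl⟩ := hker x hx
      obtain ⟨z, hz, hyz⟩ := exists_sum_pow_apply_sub_nsmul_eq_zero hφ hfix y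
      obtain ⟨w, hw, hwy⟩ := ih _ hyz
      refine ⟨w, hw, ?_⟩
      have hpz : (φ - 1) (p • z) = 0 := by simp [hz]
      rw [pow_succ', Module.End.mul_apply, hwy, map_sub, hpz, sub_zero]
  obtain ⟨z, -, hxz⟩ := exists_sum_pow_apply_sub_nsmul_eq_zero hφ hfix x
  obtain ⟨y, hy, hyx⟩ := hker_iter (p - 1) _ hxz
  obtain ⟨ψ, hψ⟩ := exists_sub_one_pow_prime_sub_one_eq p φ
  have hpψ : p • ψ y = x - p • z := by
    rw [← hyx, hψ, LinearMap.add_apply, hy, zero_add, ← nsmul_eq_mul, LinearMap.smul_apply]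
  exact ⟨ψ y + z, by rw [smul_add, hpψ, sub_add_cancel]⟩

end Divisible

section GaloisUnits

attribute [local instance] Units.mulDistribMulActionRight

variable {A B G : Type*} [CommRing A] [CommRing B] [Algebra A B] [FaithfulSMul A B] [Group G]
  [MulSemiringAction G B]

lemma exists_units_map_algebraMap_eq [Algebra.IsInvariant A B G] {u : Bˣ}
    (hu : ∀ g : G, g • u = u) : ∃ a : Aˣ, Units.map (algebraMap A B) a = u := by
  obtain ⟨a, ha⟩ := Algebra.IsInvariant.isInvariant (A := A) (G := G) (u : B) fun g ↦ by
    rw [← Units.coe_smul, hu]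
  obtain ⟨b, hb⟩ := Algebra.IsInvariant.isInvariant (A := A) (G := G) (↑u⁻¹ : B) fun g ↦ by
    rw [← Units.coe_smul, smul_inv', hu]
  have hab : a * b = 1 := FaithfulSMul.algebraMap_injective A B <| by simp [ha, hb]
  exact ⟨Units.mkOfMulEqOne a b hab, Units.ext ha⟩

theorem exists_units_prod_smul_eq_one_forall_mul_smul_ne [IsGaloisGroup G A B] {p : ℕ}
    [Fact p.Prime] (hG : Nat.card G = p) (hA : ∀ u : Aˣ, ∃ v, v ^ p = u)
    (hB : ∃ u : Bˣ, ∀ v, v ^ p ≠ u) {g : G} (hg : g ≠ 1) :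
    ∃ η : Bˣ, ∏ i ∈ Finset.range p, g ^ i • η = 1 ∧ ∀ ε : Bˣ, η * g • ε ≠ ε := by
  obtain ⟨u, hu⟩ := hB
  by_contra! hcob
  let φ : Module.End ℤ (Additive Bˣ) := Representation.ofMulDistribMulAction G Bˣ g
  have hφ_pow (i : ℕ) (x : Additive Bˣ) : (φ ^ i) x = .ofMul (g ^ i • x.toMul) := by
    rw [← map_pow]; rfl
  have hfix (x : Additive Bˣ) (hx : φ x = x) : ∃ y, φ y = y ∧ p • y = x := by
    have hx_fixed (h : G) : h • x.toMul = x.toMul :=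
      (Subgroup.zpowers_le.2 (show g ∈ MulAction.stabilizer G x.toMul from hx))
        (mem_zpowers_of_prime_card hG hg)
    obtain ⟨a, ha⟩ := exists_units_map_algebraMap_eq (A := A) hx_fixed
    obtain ⟨b, rfl⟩ := hA a
    refine ⟨.ofMul (Units.map (algebraMap A B) b), ?_, ?_⟩
    · exact congrArg Additive.ofMul (Units.ext (smul_algebraMap g (b : A)))
    · rw [← ofMul_pow, ← map_pow, ha, ofMul_toMul]
  have hker (x : Additive Bˣ) (hx : (∑ i ∈ Finset.range p, φ ^ i) x = 0) :
      ∃ y, (φ - 1) y = x := by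
    obtain ⟨ε, hε⟩ := hcob x.toMul (by
      simpa [LinearMap.sum_apply, hφ_pow, ← ofMul_prod] using hx)
    refine ⟨.ofMul ε⁻¹, ?_⟩
    change Additive.ofMul (g • ε⁻¹) - Additive.ofMul ε⁻¹ = x
    rw [← ofMul_div, smul_inv', inv_div_inv, ← eq_div_of_mul_eq' hε, ofMul_toMul]
  have hφ : φ ^ p = 1 := LinearMap.ext fun x ↦ by
    rw [hφ_pow, ← hG, pow_card_eq_one', one_smul]; rfl
  obtain ⟨v, hv⟩ := exists_prime_nsmul_eq hφ hfix hker (.ofMul u)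
  exact hu v.toMul hv

end GaloisUnits

section ClassGroup

open Pointwise

variable {A B G : Type*} [CommRing A] [CommRing B] [Algebra A B] [Group G] [MulSemiringAction G B]
  {g : G} {β : B}

lemma smul_span_singleton_eq_of_units_mul_smul_eq (hgen : ∀ h : G, h ∈ Subgroup.zpowers g)
    {η : Bˣ} (hη : η * g • β = β) (h : G) : h • Ideal.span {β} = Ideal.span {β} := by
  have hg_fixes : g • Ideal.span {β} = Ideal.span {β} := by
    rw [Ideal.pointwise_smul_def, Ideal.map_span, Set.image_singleton,
      ← Ideal.span_singleton_mul_left_unit η.isUnit]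
    exact congrArg (Ideal.span {·}) hη
  exact (Subgroup.zpowers_le (H := MulAction.stabilizer G (Ideal.span {β}))).2 hg_fixes (hgen h)

lemma exists_units_mul_smul_eq_of_map_eq_span_singleton [IsDomain B] [SMulCommClass G A B]
    {I : Ideal A} (hI : I.IsPrincipal) (hIβ : I.map (algebraMap A B) = Ideal.span {β})
    (hβ : β ≠ 0) {η : B} (hη : η * g • β = β) : ∃ ε : Bˣ, η * g • (ε : B) = ε := by
  obtain ⟨a, rfl⟩ := hI
  rw [Ideal.submodule_span_eq, Ideal.map_span, Set.image_singleton,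
    Ideal.span_singleton_eq_span_singleton] at hIβ
  obtain ⟨ε, rfl⟩ := hIβ
  refine ⟨ε, mul_left_cancel₀ (left_ne_zero_of_mul hβ) ?_⟩
  rwa [smul_mul', smul_algebraMap, mul_left_comm] at hη

variable [IsDedekindDomain A] [IsDedekindDomain B] [FaithfulSMul A B] [Module.Finite A B]
  [IsGaloisGroup G A B]

variable (G) in
lemma isPrincipal_pow_card_of_map_eq_span_singleton [Finite G] {I : Ideal A}
    (hIβ : I.map (algebraMap A B) = Ideal.span {β}) : (I ^ Nat.card G).IsPrincipal := by
  rw [IsGaloisGroup.card_eq_finrank' G A B, ← Ideal.relNorm_algebraMap, hIβ,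
    Ideal.relNorm_singleton]
  exact ⟨_, rfl⟩

attribute [local instance] Units.mulDistribMulActionRight in
theorem prime_dvd_card_classGroup [Fintype (ClassGroup A)] {p : ℕ} [hp : Fact p.Prime]
    (hG : Nat.card G = p) (hI : ∀ P : Ideal B, P.IsMaximal → P.inertia G = ⊥)
    (hA : ∀ u : Aˣ, ∃ v, v ^ p = u) (hB : ∃ u : Bˣ, ∀ v, v ^ p ≠ u) :
    p ∣ Fintype.card (ClassGroup A) := by
  have : Finite G := Nat.finite_of_card_ne_zero (hG ▸ hp.out.ne_zero)
  have : FaithfulSMul G B := IsGaloisGroup.faithful A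
  have : Nontrivial G := Finite.one_lt_card_iff_nontrivial.1 (hG ▸ hp.out.one_lt)
  obtain ⟨g, hg⟩ := exists_ne (1 : G)
  have hgp : orderOf g = p := orderOf_eq_prime (hG ▸ pow_card_eq_one') hg
  obtain ⟨η, hη, hη_ne⟩ := exists_units_prod_smul_eq_one_forall_mul_smul_ne hG hA hB hg
  obtain ⟨β, hβ, hηβ⟩ := exists_ne_zero_mul_smul_eq_of_prod_smul_eq_one (isOfFinOrder_of_finite g)
    (η := (η : B)) (by simpa [hgp] using congrArg Units.val hη)
  have hmap := map_comap_eq_of_inertia_eq_bot (A := A) hI <|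
    smul_span_singleton_eq_of_units_mul_smul_eq (fun _ ↦ mem_zpowers_of_prime_card hG hg) hηβ
  by_contra hdvd
  have hprincipal := Ideal.IsPrincipal.of_isPrincipal_pow_of_coprime
    ((hp.out.coprime_iff_not_dvd).2 hdvd)
    (hG ▸ isPrincipal_pow_card_of_map_eq_span_singleton G hmap)
  obtain ⟨ε, hε⟩ := exists_units_mul_smul_eq_of_map_eq_span_singleton hprincipal hmap hβ hηβ
  exact hη_ne ε (Units.ext hε)

end ClassGroup

section NumberFieldUnits

lemma nsmul_ne_basis_apply {ι M : Type*} [AddCommGroup M] [Module ℤ M] (b : Module.Basis ι ℤ M)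
    (i : ι) {n : ℕ} (hn : n ≠ 1) (y : M) : n • y ≠ b i := by
  intro hy
  have hcoord : (n : ℤ) * b.repr y i = 1 := by simpa using congrArg (b.repr · i) hy
  exact hn (by simpa using Int.isUnit_iff_natAbs_eq.1 (.of_mul_eq_one _ hcoord))

open NumberField

lemma isTotallyComplex_of_sq_eq_ratCast {K : Type*} [Field K] {α : K} {q : ℚ} (hq : q < 0)
    (hα : α ^ 2 = q) :
    IsTotallyComplex K where
  isComplex v := by
    rw [← InfinitePlace.not_isReal_iff_isComplex]
    intro hv
    have hsq := congrArg (InfinitePlace.embedding_of_isReal hv) hα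
    rw [map_pow, map_ratCast] at hsq
    exact (sq_nonneg _).not_gt (hsq ▸ Rat.cast_lt_zero.2 hq)

variable {K : Type*} [Field K] [NumberField K]

lemma units_rank_pos_of_two_lt_finrank_s3 (hK : 2 < Module.finrank ℚ K) : 0 < Units.rank K := by
  have hplaces := InfinitePlace.card_eq_nrRealPlaces_add_nrComplexPlaces K
  have hdegree := InfinitePlace.card_add_two_mul_card_eq_rank K
  unfold Units.rank
  omega

lemma units_rank_eq_zero_of_isTotallyComplex [IsTotallyComplex K] (hK : Module.finrank ℚ K = 2) :
    Units.rank K = 0 := by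
  have hplaces := InfinitePlace.card_eq_nrRealPlaces_add_nrComplexPlaces K
  have hdegree := InfinitePlace.card_add_two_mul_card_eq_rank K
  have hreal := IsTotallyComplex.nrRealPlaces_eq_zero K
  unfold Units.rank
  omega

lemma exists_units_forall_pow_ne_of_rank_pos (hK : 0 < Units.rank K) {n : ℕ} (hn : n ≠ 1) :
    ∃ u : (𝓞 K)ˣ, ∀ v, v ^ n ≠ u := by
  let b := Units.basisModTorsion K
  obtain ⟨u, hu⟩ := QuotientGroup.mk_surjective (s := Units.torsion K) (b ⟨0, hK⟩).toMul
  refine ⟨u, fun v hv ↦ nsmul_ne_basis_apply b ⟨0, hK⟩ hn (.ofMul (QuotientGroup.mk v)) ?_⟩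
  rw [← ofMul_pow, ← QuotientGroup.mk_pow, hv, hu, ofMul_toMul]

lemma mem_torsion_of_rank_eq_zero (hK : Units.rank K = 0) (u : (𝓞 K)ˣ) : u ∈ Units.torsion K := by
  obtain ⟨⟨ζ, e⟩, hu, -⟩ := Units.exist_unique_eq_mul_prod K u
  have : IsEmpty (Fin (Units.rank K)) := hK ▸ Fin.isEmpty
  rw [Finset.univ_eq_empty, Finset.prod_empty, mul_one] at hu
  exact hu ▸ ζ.2

lemma exists_units_pow_eq_of_rank_eq_zero (hK : Units.rank K = 0) {n : ℕ}
    (hroots : ∀ ζ : K, ζ ^ n = 1 → ζ = 1) (u : (𝓞 K)ˣ) : ∃ v, v ^ n = u := by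
  have hinj : Function.Injective (powMonoidHom n : Units.torsion K →* Units.torsion K) := by
    rw [injective_iff_map_eq_one]
    intro ζ hζ
    have hζ_pow : ((ζ : (𝓞 K)ˣ) : K) ^ n = 1 := by
      simpa using congrArg (fun z : Units.torsion K ↦ ((z : (𝓞 K)ˣ) : K)) hζ
    exact Subtype.ext (Units.coe_injective K (by simpa using hroots _ hζ_pow))
  obtain ⟨v, hv⟩ := Finite.injective_iff_surjective.1 hinj ⟨u, mem_torsion_of_rank_eq_zero hK u⟩
  exact ⟨v, congrArg Subtype.val hv⟩

end NumberFieldUnits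

section QuadraticExtension

variable {F K : Type*} [Field F] [Field K] [Algebra F K] {a b : F} {α β : K}

lemma exists_eq_add_mul_of_finrank_eq_two (hK : Module.finrank F K = 2)
    (hα : ∀ c : F, algebraMap F K c ≠ α) (β : K) :
    ∃ x y : F, β = algebraMap F K x + algebraMap F K y * α := by
  have hindep : LinearIndependent F ![1, α] :=
    (LinearIndependent.pair_iff' one_ne_zero).2 fun c ↦ by
      rw [← Algebra.algebraMap_eq_smul_one]; exact hα c
  have hβ : β ∈ Submodule.span F (Set.range ![1, α]) :=
    hindep.span_eq_top_of_card_eq_finrank (by simp [hK]) ▸ Submodule.mem_top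
  rw [Matrix.range_cons_cons_empty, Submodule.mem_span_pair] at hβ
  obtain ⟨x, y, rfl⟩ := hβ
  exact ⟨x, y, by simp [Algebra.smul_def]⟩

lemma isSquare_or_isSquare_or_isSquare_mul_of_finrank_eq_two (hK : Module.finrank F K = 2)
    (h2 : (2 : F) ≠ 0) (hα : α ^ 2 = algebraMap F K a) (hβ : β ^ 2 = algebraMap F K b) :
    IsSquare a ∨ IsSquare b ∨ IsSquare (a * b) := by
  refine or_iff_not_imp_left.2 fun ha ↦ ?_
  have hα_notMem (c : F) : algebraMap F K c ≠ α := by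
    rintro rfl
    exact ha ⟨c, (algebraMap F K).injective <| by rw [← hα, map_mul, sq]⟩
  obtain ⟨x, y, rfl⟩ := exists_eq_add_mul_of_finrank_eq_two hK hα_notMem β
  have hxy : 2 * x * y = 0 := by
    by_contra hxy
    refine hα_notMem ((b - x ^ 2 - y ^ 2 * a) / (2 * x * y)) ?_
    have hxy' : algebraMap F K (2 * x * y) ≠ 0 := by simpa using hxy
    rw [map_div₀, div_eq_iff hxy']
    simp only [map_mul, map_sub, map_pow, map_ofNat]
    linear_combination -hβ + algebraMap F K y ^ 2 * hα
  rcases mul_eq_zero.1 hxy with hx | rfl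
  · obtain rfl : x = 0 := (mul_eq_zero.1 hx).resolve_left h2
    refine .inr ⟨y * a, (algebraMap F K).injective ?_⟩
    simp only [map_mul, ← hβ, ← hα, map_zero]
    ring
  · refine .inl ⟨x, (algebraMap F K).injective ?_⟩
    rw [← hβ, map_zero, zero_mul, add_zero, map_mul, sq]

end QuadraticExtension

section CubicInertia

variable {B G : Type*} [CommRing B] [Group G] [MulSemiringAction G B] {θ a b : B}

lemma linearCoeff_eq_mul_smul_smul_sub_sq [IsDomain B] {g : G} (hg : g ^ 3 = 1) (ha : g • a = a)
    (hb : g • b = b) (hθ : θ ^ 3 + a * θ + b = 0) (hgθ : g • θ ≠ θ) :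
    a = θ * g • g • θ - (g • θ) ^ 2 := by
  have hcubic : (g • θ) ^ 3 + a * g • θ + b = 0 := by
    simpa [smul_add, smul_mul', smul_pow', ha, hb] using congrArg (g • ·) hθ
  have hquot : (g • θ) ^ 2 + g • θ * θ + θ ^ 2 + a = 0 := by
    apply mul_left_cancel₀ (sub_ne_zero.2 hgθ)
    linear_combination hcubic - hθ
  have hquot' : (g • g • θ) ^ 2 + g • g • θ * g • θ + (g • θ) ^ 2 + a = 0 := by
    simpa [smul_add, smul_mul', smul_pow', ha] using congrArg (g • ·) hquot
  have hg2θ : g • g • θ ≠ θ := by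
    intro h
    apply hgθ
    rw [← h, ← mul_smul, ← mul_smul, ← pow_three', hg, one_smul, h]
  have htrace : θ + g • θ + g • g • θ = 0 := by
    apply mul_left_cancel₀ (sub_ne_zero.2 hg2θ)
    linear_combination hquot' - hquot
  linear_combination hquot - θ * htrace

theorem inertia_eq_bot_of_cubic [IsDomain B] (hG : Nat.card G = 3) (ha : ∀ g : G, g • a = a)
    (ha_unit : IsUnit a) (hb : ∀ g : G, g • b = b) (hθ : θ ^ 3 + a * θ + b = 0)
    (hθ_moved : ∀ g : G, g ≠ 1 → g • θ ≠ θ) {P : Ideal B} (hP : P ≠ ⊤) : P.inertia G = ⊥ := by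
  refine (Subgroup.eq_bot_iff_forall _).2 fun g hg ↦ by_contra fun hg1 ↦ hP ?_
  refine P.eq_top_of_isUnit_mem ?_ ha_unit
  rw [linearCoeff_eq_mul_smul_smul_sub_sq (hG ▸ pow_card_eq_one') (ha g) (hb g) hθ (hθ_moved g hg1)]
  have hmem : θ * (g • g • θ - g • θ) - g • θ * (g • θ - θ) ∈ P :=
    sub_mem (P.mul_mem_left _ (hg _)) (P.mul_mem_left _ (hg _))
  convert hmem using 1
  ring

end CubicInertia

section CubicSplitting

open Polynomial

variable {K : Type*} [Field K]

lemma splits_cubic_of_root {a b δ x : K} (h2 : (2 : K) ≠ 0)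
    (hδ : δ ^ 2 = -(4 * a ^ 3 + 27 * b ^ 2)) (hx : x ^ 3 + a * x + b = 0)
    (hx' : 3 * x ^ 2 + a ≠ 0) : (X ^ 3 + C a * X + C b).Splits := by
  -- `q` is the difference of the two remaining roots `y` and `-x - y`.
  obtain ⟨q, rfl⟩ : ∃ q, q * (3 * x ^ 2 + a) = δ := ⟨_, div_mul_cancel₀ δ hx'⟩
  have hq : q ^ 2 = -(3 * x ^ 2 + 4 * a) := by
    apply mul_right_cancel₀ (pow_ne_zero 2 hx')
    linear_combination hδ - 27 * (b - x ^ 3 - a * x) * hx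
  obtain ⟨y, rfl⟩ : ∃ y, q = 2 * y + x := ⟨(q - x) / 2, by field_simp; ring⟩
  have hprod : y * (-x - y) = x ^ 2 + a := by
    apply mul_left_cancel₀ (mul_ne_zero h2 h2)
    linear_combination -hq
  have hfactor : X ^ 3 + C a * X + C b = (X - C x) * (X - C y) * (X - C (-x - y)) := by
    obtain rfl : a = y * (-x - y) - x ^ 2 := by linear_combination -hprod
    obtain rfl : b = -(x * (y * (-x - y))) := by linear_combination hx
    simp only [C_neg, C_mul, C_sub, C_pow]
    ring
  rw [hfactor]
  exact ((Splits.X_sub_C x).mul (Splits.X_sub_C y)).mul (Splits.X_sub_C _)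

theorem isGalois_of_adjoin_cubic_root {L : Type*} [Field L] [Algebra K L] (h2 : (2 : K) ≠ 0)
    {a b δ : K} (hδ : δ ^ 2 = -(4 * a ^ 3 + 27 * b ^ 2))
    (hsep : (X ^ 3 + C a * X + C b).Separable) {x : L}
    (hx : aeval x (X ^ 3 + C a * X + C b) = 0) (htop : Algebra.adjoin K {x} = ⊤) :
    IsGalois K L := by
  have hsplits : ((X ^ 3 + C a * X + C b).map (algebraMap K L)).Splits := by
    have h2' : (2 : L) ≠ 0 := by
      simpa only [map_ofNat, map_zero] using (algebraMap K L).injective.ne h2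
    have hδ' : algebraMap K L δ ^ 2 = -(4 * algebraMap K L a ^ 3 + 27 * algebraMap K L b ^ 2) := by
      simpa only [map_pow, map_neg, map_add, map_mul, map_ofNat] using congrArg (algebraMap K L) hδ
    have hderiv : 3 * x ^ 2 + algebraMap K L a ≠ 0 := by
      have hderivative : derivative (X ^ 3 + C a * X + C b) = 3 * X ^ 2 + C a := by
        norm_num [C_ofNat]
      simpa [hderivative, map_ofNat] using hsep.aeval_derivative_ne_zero hx
    simpa using splits_cubic_of_root h2' hδ' (by simpa using hx) hderiv
  have : (X ^ 3 + C a * X + C b).IsSplittingField K L :=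
    ⟨hsplits, top_le_iff.1 <| htop ▸ Algebra.adjoin_mono (Set.singleton_subset_iff.2 <|
      (mem_rootSet_of_ne hsep.ne_zero).2 hx)⟩
  exact .of_separable_splitting_field hsep

end CubicSplitting

section CubicIrreducible

open Polynomial

lemma irreducible_map_of_natDegree_eq_three {F K : Type*} [Field F] [Field K] [Algebra F K]
    {f : F[X]} (hf : Irreducible f) (hdeg : f.natDegree = 3) (hK : ¬3 ∣ Module.finrank F K) :
    Irreducible (f.map (algebraMap F K)) := by
  have : Module.Finite F K := Module.finite_of_finrank_pos (by_contra fun h ↦ hK (by simp_all))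
  refine irreducible_of_degree_le_three_of_not_isRoot (by simp [hdeg]) fun x hx ↦ hK ?_
  have hx_aeval : aeval x f = 0 := by simpa [IsRoot, eval_map_algebraMap] using hx
  have hminpoly := minpoly.degree_dvd (Algebra.IsIntegral.isIntegral (R := F) x)
  rwa [← minpoly.eq_of_irreducible hf hx_aeval, natDegree_mul_leadingCoeff_inv f hf.ne_zero,
    hdeg] at hminpoly

lemma irreducible_X_pow_three_add_X_add_C_of_odd {c : ℤ} (hc : Odd c) :
    Irreducible (X ^ 3 + X + C (c : ℚ)) := by
  have hmonic : (X ^ 3 + X + C c).Monic := by monicity!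
  have hmod : Irreducible (X ^ 3 + X + 1 : (ZMod 2)[X]) := by
    have hdeg : (X ^ 3 + X + 1 : (ZMod 2)[X]).natDegree = 3 := by compute_degree!
    refine irreducible_of_degree_le_three_of_not_isRoot (by simp [hdeg]) fun x ↦ ?_
    simp only [IsRoot, eval_add, eval_pow, eval_X, eval_one]
    revert x
    decide
  have hint : Irreducible (X ^ 3 + X + C c) := by
    refine hmonic.irreducible_of_irreducible_map (Int.castRingHom (ZMod 2)) _ ?_
    have hc_mod : (c : ZMod 2) = 1 := hc.intCast_zmod_two
    simpa only [Polynomial.map_add, Polynomial.map_pow, map_X, map_C, Int.coe_castRingHom,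
      hc_mod, C_1] using hmod
  simpa using hmonic.irreducible_iff_irreducible_map_fraction_map (K := ℚ).1 hint

end CubicIrreducible

section CubicClassNumber

open NumberField Polynomial

variable {K : Type*} [Field K] [NumberField K]

theorem three_dvd_classNumber_of_adjoin_cubic_root {L : Type*} [Field L] [NumberField L]
    [Algebra K L] [IsGalois K L] (hL : Module.finrank K L = 3) (hK : ∀ u : (𝓞 K)ˣ, ∃ v, v ^ 3 = u)
    {a b : 𝓞 K} (ha : IsUnit a) {θ : 𝓞 L}
    (hθ : θ ^ 3 + algebraMap (𝓞 K) (𝓞 L) a * θ + algebraMap (𝓞 K) (𝓞 L) b = 0)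
    (htop : Algebra.adjoin K {(θ : L)} = ⊤) : 3 ∣ classNumber K := by
  have hG : Nat.card Gal(L/K) = 3 := by rw [IsGalois.card_aut_eq_finrank, hL]
  have hθ_moved (σ : Gal(L/K)) (hσ : σ ≠ 1) : σ • θ ≠ θ := fun hσθ ↦ hσ <| by
    have hσ_fixes : Set.EqOn σ.toAlgHom (AlgHom.id K L) {(θ : L)} :=
      Set.eqOn_singleton.2 (congrArg (algebraMap (𝓞 L) L) hσθ)
    exact AlgEquiv.coe_toAlgHom_injective (AlgHom.ext_of_adjoin_eq_top htop hσ_fixes)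
  have hinertia (P : Ideal (𝓞 L)) (hP : P.IsMaximal) : P.inertia Gal(L/K) = ⊥ :=
    inertia_eq_bot_of_cubic hG (fun σ ↦ smul_algebraMap σ a) (ha.map _)
      (fun σ ↦ smul_algebraMap σ b) hθ hθ_moved hP.ne_top
  have hL_units : ∃ u : (𝓞 L)ˣ, ∀ v, v ^ 3 ≠ u := by
    refine exists_units_forall_pow_ne_of_rank_pos (units_rank_pos_of_two_lt_finrank_s3 ?_) (by simp)
    have hdegree := Module.finrank_mul_finrank ℚ K L
    rw [hL] at hdegree
    have hpos : 0 < Module.finrank ℚ K := Module.finrank_pos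
    omega
  exact prime_dvd_card_classGroup (B := 𝓞 L) hG hinertia hK hL_units

theorem three_dvd_classNumber_of_irreducible_cubic (hK : ∀ u : (𝓞 K)ˣ, ∃ v, v ^ 3 = u)
    {a b : 𝓞 K} (ha : IsUnit a) {δ : K} (hδ : δ ^ 2 = -(4 * (a : K) ^ 3 + 27 * (b : K) ^ 2))
    (hf : Irreducible (X ^ 3 + C (a : K) * X + C (b : K))) : 3 ∣ classNumber K := by
  set f := X ^ 3 + C (a : K) * X + C (b : K) with hf_def
  have hmonic : f.Monic := by rw [hf_def]; monicity!
  have : Fact (Irreducible f) := ⟨hf⟩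
  have : Module.Finite K (AdjoinRoot f) := hmonic.finite_adjoinRoot
  have : NumberField (AdjoinRoot f) := .of_module_finite K _
  have hroot : aeval (AdjoinRoot.root f) f = 0 := by simp
  have htop : Algebra.adjoin K {AdjoinRoot.root f} = ⊤ := AdjoinRoot.adjoinRoot_eq_top
  have : IsGalois K (AdjoinRoot f) :=
    isGalois_of_adjoin_cubic_root two_ne_zero hδ hf.separable hroot htop
  have hL : Module.finrank K (AdjoinRoot f) = 3 := by
    rw [(AdjoinRoot.powerBasis hf.ne_zero).finrank, AdjoinRoot.powerBasis_dim, hf_def]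
    compute_degree!
  have hcubic : AdjoinRoot.root f ^ 3 + algebraMap K (AdjoinRoot f) a * AdjoinRoot.root f +
      algebraMap K (AdjoinRoot f) b = 0 := by
    simpa [hf_def] using hroot
  have hint : IsIntegral ℤ (AdjoinRoot.root f) := by
    refine isIntegral_trans (A := 𝓞 K) _ ⟨X ^ 3 + C a * X + C b, by monicity!, ?_⟩
    simpa [IsScalarTower.algebraMap_apply (𝓞 K) K (AdjoinRoot f)] using hcubic
  obtain ⟨θ, hθ⟩ : ∃ θ : 𝓞 (AdjoinRoot f), (θ : AdjoinRoot f) = AdjoinRoot.root f :=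
    ⟨⟨_, hint⟩, rfl⟩
  refine three_dvd_classNumber_of_adjoin_cubic_root hL hK ha (θ := θ) (b := b) ?_ (hθ ▸ htop)
  apply RingOfIntegers.coe_injective
  simpa [hθ, ← IsScalarTower.algebraMap_apply (𝓞 K) (𝓞 (AdjoinRoot f)),
    IsScalarTower.algebraMap_apply (𝓞 K) K (AdjoinRoot f)] using hcubic

end CubicClassNumber

section QuadraticField

open NumberField Polynomial

lemma sq_two_mul_add_one_eq_neg_three {K : Type*} [CommRing K] [IsDomain K] {ζ : K}
    (hζ : ζ ^ 3 = 1) (hζ1 : ζ ≠ 1) : (2 * ζ + 1) ^ 2 = -3 := by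
  have hquad : ζ ^ 2 + ζ + 1 = 0 := by
    apply mul_left_cancel₀ (sub_ne_zero.2 hζ1)
    linear_combination hζ
  linear_combination 4 * hquad

lemma not_isSquare_three_mul_of_not_three_dvd {k : ℤ} (hk : ¬3 ∣ k) : ¬IsSquare (3 * k) := by
  rintro ⟨x, hx⟩
  obtain ⟨y, rfl⟩ : 3 ∣ x := Int.prime_three.dvd_of_dvd_pow ⟨k, by rw [sq, hx]⟩
  exact hk ⟨y ^ 2, by linarith⟩

lemma eq_one_of_pow_three_eq_one_of_sq_eq {K : Type*} [Field K] [CharZero K] {c : ℤ} {δ : K}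
    (hK : Module.finrank ℚ K = 2) (hδ : δ ^ 2 = -(27 * (c : K) ^ 2 + 4)) {ζ : K}
    (hζ : ζ ^ 3 = 1) : ζ = 1 := by
  by_contra hζ1
  have hδ' : δ ^ 2 = algebraMap ℚ K ((-(27 * c ^ 2 + 4) : ℤ) : ℚ) := by simpa using hδ
  have hω : (2 * ζ + 1) ^ 2 = algebraMap ℚ K ((-3 : ℤ) : ℚ) := by
    simpa using sq_two_mul_add_one_eq_neg_three hζ hζ1
  have hsquares := isSquare_or_isSquare_or_isSquare_mul_of_finrank_eq_two hK two_ne_zero hδ' hω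
  rw [← Int.cast_mul, Rat.isSquare_intCast_iff, Rat.isSquare_intCast_iff,
    Rat.isSquare_intCast_iff] at hsquares
  rcases hsquares with h | h | h
  · nlinarith [h.nonneg, sq_nonneg c]
  · exact absurd h.nonneg (by simp)
  · refine not_isSquare_three_mul_of_not_three_dvd (k := 27 * c ^ 2 + 4) (by lia) ?_
    convert h using 1
    ring

variable {K : Type*} [Field K] [NumberField K] {c : ℤ} {δ : K}

lemma exists_units_pow_three_eq_of_sq_eq (hK : Module.finrank ℚ K = 2)
    (hδ : δ ^ 2 = -(27 * (c : K) ^ 2 + 4)) (u : (𝓞 K)ˣ) : ∃ v, v ^ 3 = u := by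
  have : IsTotallyComplex K := by
    have hneg : -(27 * (c : ℚ) ^ 2 + 4) < 0 := neg_neg_of_pos (by positivity)
    exact isTotallyComplex_of_sq_eq_ratCast hneg (by simpa using hδ)
  exact exists_units_pow_eq_of_rank_eq_zero (units_rank_eq_zero_of_isTotallyComplex hK)
    (fun _ ↦ eq_one_of_pow_three_eq_one_of_sq_eq hK hδ) u

theorem three_dvd_classNumber_of_sq_eq (hK : Module.finrank ℚ K = 2) (hc : Odd c)
    (hδ : δ ^ 2 = -(27 * (c : K) ^ 2 + 4)) : 3 ∣ classNumber K := by
  refine three_dvd_classNumber_of_irreducible_cubic (a := 1) (b := (c : 𝓞 K)) (δ := δ)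
    (exists_units_pow_three_eq_of_sq_eq hK hδ) isUnit_one ?_ ?_
  · simp only [map_one, map_intCast]
    linear_combination hδ
  · have hirr := irreducible_map_of_natDegree_eq_three (K := K)
      (irreducible_X_pow_three_add_X_add_C_of_odd hc) (by compute_degree!) (by simp [hK])
    simpa using hirr

end QuadraticField

/-- Let `m > 1` and `p` be odd integers and `n` a positive integer.  If `d₃` is the squarefree
part of `-(3 ^ m * p ^ (2 * n) + 4)`, then `3` divides the class number of `ℚ(√d₃)`. -/
theorem class_number_div_three_of_sqrt_sqfree_part_neg_three_pow_mul_sq_pow_add_four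
    (m : ℕ) (hm : 1 < m) (hmodd : Odd m) (p : ℤ) (hpodd : Odd p)
    (n : ℕ) (hn : 0 < n)
    (d₃ : ℤ) (hsf : Squarefree d₃) (t : ℤ) (ht : 0 < t)
    (hpart : -((3 : ℤ) ^ m * p ^ (2 * n) + 4) = t ^ 2 * d₃)
    (K : Type*) [Field K] [NumberField K] (hdeg : Module.finrank ℚ K = 2)
    (hsqrt : ∃ α : K, α ^ 2 = (d₃ : K)) :
    3 ∣ NumberField.classNumber K := by
  obtain ⟨α, hα⟩ := hsqrt
  obtain ⟨j, rfl⟩ : ∃ j, m = 2 * j + 3 := by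
    obtain ⟨k, rfl⟩ := hmodd
    exact ⟨k - 1, by lia⟩
  have hodd : Odd (3 ^ j * p ^ n) := (Odd.pow (by decide)).mul hpodd.pow
  refine three_dvd_classNumber_of_sq_eq hdeg hodd (δ := t * α) ?_
  have hpart_cast := congrArg (Int.cast : ℤ → K) hpart
  push_cast at hpart_cast ⊢
  linear_combination (t : K) ^ 2 * hα - hpart_cast
end
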